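/- Let N > 10, and suppose R_N is tiled by triangles all similar to a triangle whose angles α, β, γ are rational multiples of π. If the equation at every vertex V_j of R_N is α + β = δ_N (that is, exactly two tiles meet each vertex of R_N, one with its angle α and one with its angle β there), then α = β = (N−2)π/(2N) and γ = 2π/N. -/

import Mathlib

/-!
Identify the plane with `ℂ`, and compare the tiling with the fan of the `N` central triangles of
the polygon. Both families cover the polygon without overlap, so they give the same total integral
for every continuous function. Testing against the second derivative of a polynomial `φ` evaluated
at `z - x z̄`, with a parameter `x`, Hermite's formula expresses each triangle integral through the
values of `φ` at the images of the vertices, and the poles in `x` are the directions of the edges. Comparing residues shows that the signed marks (vertex,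
direction of an adjacent edge) of the tiles and of the fan cancel (`sum_marks_eq_zero`). Hence any
function of a vertex and a direction has the same signed sum over both families.

Let `ζ` be a primitive `M`-th root of unity, where `M` is a common denominator of the angles, and
let `k` be coprime to `M`. The field embedding `ζ ↦ ζ ^ k` of `ℚ(ζ)` extends to an additive map `F`
of the whole plane, semilinear over `ℚ(ζ)` and commuting with complex conjugation
(`exists_galoisMap`). There is a weight `wt` on marks whose signed sum over a triangle is, up to
the factor `2i`, twice the signed area of its image under `F`, multiplied by the orientation sign
of the original triangle, and `0` if the edges do not have directions in `ℚ(ζ)`. The weight thus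
yields an area identity for the conjugated tiling (`conjugate_area`):
`X sin (kα) sin (kβ) / sin (kγ) = N sin (kγ)` with `X ≥ 0`. Therefore
`sin (kα) sin (kβ) > 0`. As `α + β = π - 2π / N` and `k` is odd, this says
`cos (k (α - β)) + cos (2πk / N) > 0` for every `k` coprime to `M`.

The last inequality forces `α = β` (`theta_eq_zero`): fix the residue of `k` modulo
`L = lcm (2, N)` near `N / 2`, so that `cos (2πk / N)` is near `-1`. All the corresponding
`cos (k (α - β))` are then large, which is possible only if `α - β` is a multiple of `2π / L`,
because complete cosets of roots of unity of prime order sum to zero (`pow_eq_one_of_re_gt`). A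
finite number of well chosen `k` modulo `L` then excludes every nonzero multiple. The value of `γ`
is the angle sum.
-/

open Real EuclideanGeometry

noncomputable section

/-- The Euclidean plane. -/
abbrev Pt : Type := EuclideanSpace ℝ (Fin 2)

/-- The `j`-th vertex of the regular `N`-gon inscribed in the unit circle. -/
noncomputable def ngonVertex (N : ℕ) (j : ℕ) : Pt :=
  (WithLp.equiv 2 (Fin 2 → ℝ)).symm ![Real.cos (2 * π * j / N), Real.sin (2 * π * j / N)]

/-- The regular `N`-gon `R_N`. -/
noncomputable def ngon (N : ℕ) : Set Pt :=
  convexHull ℝ (Set.range fun j : Fin N => ngonVertex N j)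

/-- The interior angle `δ_N = (N-2)π/N` of the regular `N`-gon. -/
noncomputable def ngonAngle (N : ℕ) : ℝ := ((N : ℝ) - 2) * π / N

/-- The closed triangular region spanned by the three points `T 0, T 1, T 2`. -/
noncomputable def triRegion (T : Fin 3 → Pt) : Set Pt :=
  convexHull ℝ (Set.range T)

/-- The angle of the triangle `T` at its `i`-th vertex. -/
noncomputable def angleAt (T : Fin 3 → Pt) (i : Fin 3) : ℝ :=
  EuclideanGeometry.angle (T (i + 1)) (T i) (T (i + 2))

/-- `T` is a tiling of the regular `N`-gon by finitely many nondegenerate triangles: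
the tiles have pairwise disjoint interiors and their union is `R_N`. -/
def IsTiling (N : ℕ) {m : ℕ} (T : Fin m → Fin 3 → Pt) : Prop :=
  (∀ t, AffineIndependent ℝ (T t)) ∧
  (Pairwise fun t s => Disjoint (interior (triRegion (T t))) (interior (triRegion (T s)))) ∧
  (⋃ t, triRegion (T t)) = ngon N

/-- The triangle `T` has angles `α, β, γ` at its vertices `0, 1, 2` (a labeling of its
vertices by the three angles). -/
def HasAngles (T : Fin 3 → Pt) (α β γ : ℝ) : Prop :=
  angleAt T 0 = α ∧ angleAt T 1 = β ∧ angleAt T 2 = γ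

/-- The triangle `T` is similar to a triangle with angles `α, β, γ`:
its angles are `α, β, γ` in some order (sizes and orientation are unrestricted). -/
def SimilarTo (T : Fin 3 → Pt) (α β γ : ℝ) : Prop :=
  ∃ σ : Equiv.Perm (Fin 3), HasAngles (fun i => T (σ i)) α β γ

/-- The number of tiles of the (labeled) tiling `T` whose vertex labeled `i`
lies at the point `V`. -/
noncomputable def countAt {m : ℕ} (T : Fin m → Fin 3 → Pt) (i : Fin 3) (V : Pt) : ℕ :=
  Nat.card {t : Fin m // T t i = V}

/-- The tiling `T`, by triangles similar to the triangle with angles `α, β, γ`, is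
regular: one can label the vertices of each tile by the angles `α, β, γ` of the tile
at those vertices so that, for two of the labels, at every point of the plane the
number of tiles having their vertex carrying the first label at that point equals the
number of tiles having their vertex carrying the second label there. -/
def IsRegularTiling {m : ℕ} (T : Fin m → Fin 3 → Pt) (α β γ : ℝ) : Prop :=
  ∃ L : Fin m → Equiv.Perm (Fin 3),
    (∀ t, HasAngles (fun i => T t (L t i)) α β γ) ∧
    ∃ i j : Fin 3, i ≠ j ∧
      ∀ V : Pt, countAt (fun t i' => T t (L t i')) i V
              = countAt (fun t i' => T t (L t i')) j V



open MeasureTheory Polynomial Filter Topology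
open scoped ComplexConjugate

/-! ### Integrals over triangles -/

/-- The right isosceles reference triangle with vertices `0, 1, i`. -/
def stdTri : Set ℂ := {z | 0 ≤ z.re ∧ 0 ≤ z.im ∧ z.re + z.im ≤ 1}

lemma isClosed_stdTri : IsClosed stdTri :=
  (isClosed_le continuous_const Complex.continuous_re).inter
    ((isClosed_le continuous_const Complex.continuous_im).inter
      (isClosed_le (Complex.continuous_re.add Complex.continuous_im) continuous_const))

lemma integral_stdTri {f : ℂ → ℂ} (hf : Continuous f) :
    ∫ z in stdTri, f z = ∫ s in (0 : ℝ)..1, ∫ t in (0 : ℝ)..(1 - s), f (s + t * Complex.I) := by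
  have hcl : IsClosed {p : ℝ × ℝ | 0 ≤ p.1 ∧ 0 ≤ p.2 ∧ p.1 + p.2 ≤ 1} :=
    (isClosed_le continuous_const continuous_fst).inter
    ((isClosed_le continuous_const continuous_snd).inter
      (isClosed_le (continuous_fst.add continuous_snd) continuous_const))
  set S : Set (ℝ × ℝ) := {p : ℝ × ℝ | 0 ≤ p.1 ∧ 0 ≤ p.2 ∧ p.1 + p.2 ≤ 1} with hS
  have hfc : Continuous fun p : ℝ × ℝ => f (p.1 + p.2 * Complex.I) := by fun_prop
  have hcomp : IsCompact S := by
    refine (isCompact_Icc (a := ((0, 0) : ℝ × ℝ)) (b := (1, 1))).of_isClosed_subset hcl ?_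
    rintro ⟨a, b⟩ ⟨h1, h2, h3⟩
    simp only [Set.mem_Icc, Prod.mk_le_mk] at *
    exact ⟨⟨h1, h2⟩, by linarith, by linarith⟩
  have h1 : ∫ z in stdTri, f z = ∫ p in S, f (p.1 + p.2 * Complex.I) := by
    have := (Complex.volume_preserving_equiv_real_prod.symm).setIntegral_preimage_emb
      (Complex.measurableEquivRealProd.symm.measurableEmbedding) f stdTri
    rw [← this]
    have hpre : (Complex.measurableEquivRealProd.symm ⁻¹' stdTri) = S := by
      ext p
      simp [stdTri, hS]
    rw [hpre]
    refine setIntegral_congr_fun hcl.measurableSet fun p _ => ?_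
    refine congrArg f ?_
    apply Complex.ext <;> simp
  rw [h1, ← integral_indicator hcl.measurableSet, Measure.volume_eq_prod,
    integral_prod _ (((hfc.continuousOn.integrableOn_compact hcomp)).integrable_indicator
      hcl.measurableSet),
    intervalIntegral.integral_of_le zero_le_one, ← integral_Icc_eq_integral_Ioc,
    ← integral_indicator measurableSet_Icc]
  congr 1
  ext s
  by_cases hs : s ∈ Set.Icc (0 : ℝ) 1
  · rw [Set.indicator_of_mem hs, intervalIntegral.integral_of_le (by linarith [hs.2]),
      ← integral_Icc_eq_integral_Ioc, ← integral_indicator measurableSet_Icc]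
    congr 1
    ext t
    by_cases ht : t ∈ Set.Icc 0 (1 - s)
    · rw [Set.indicator_of_mem ht, Set.indicator_of_mem]
      exact ⟨hs.1, ht.1, by simp only; linarith [ht.2]⟩
    · rw [Set.indicator_of_notMem ht, Set.indicator_of_notMem]
      rintro ⟨_, h2, h3⟩
      exact ht ⟨h2, by simp only at h3; linarith⟩
  · rw [Set.indicator_of_notMem hs]
    rw [← integral_zero ℝ ℂ (μ := volume)]
    congr 1
    ext t
    rw [Set.indicator_of_notMem]
    rintro ⟨h1, h2, h3⟩
    exact hs ⟨h1, by simp only at h2 h3; linarith⟩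

/-- The fundamental theorem of calculus for a polynomial along a complex segment. -/
lemma integral_eval_derivative (φ : ℂ[X]) {x d : ℂ} (hd : d ≠ 0) (b : ℝ) :
    ∫ t in (0 : ℝ)..b, φ.derivative.eval (x + t * d) = (φ.eval (x + b * d) - φ.eval x) / d := by
  have hder : ∀ t ∈ Set.uIcc 0 b, HasDerivAt (fun t : ℝ => φ.eval (x + t * d) / d)
      (φ.derivative.eval (x + t * d)) t := by
    intro t _
    have h1 : HasDerivAt (fun t : ℝ => x + t * d) (1 * d) t :=
      ((Complex.ofRealCLM.hasDerivAt (x := t)).mul_const d).const_add x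
    have h2 := ((φ.hasDerivAt (x + t * d)).comp t h1).div_const d
    have e : φ.derivative.eval (x + t * d) * (1 * d) / d = φ.derivative.eval (x + t * d) := by
      rw [one_mul, mul_div_assoc, div_self hd, mul_one]
    rw [e] at h2
    exact h2
  rw [intervalIntegral.integral_eq_sub_of_hasDerivAt hder
    (Continuous.intervalIntegrable (by fun_prop) _ _)]
  simp [sub_div]

lemma integral_stdTri_poly (φ : ℂ[X]) {x0 x1 x2 : ℂ} (h01 : x1 ≠ x0) (h02 : x2 ≠ x0)
    (h12 : x1 ≠ x2) :
    ∫ z in stdTri, φ.derivative.derivative.eval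
        (x0 + z.re * (x1 - x0) + z.im * (x2 - x0)) =
      ((φ.eval x1 - φ.eval x2) / (x1 - x2) - (φ.eval x1 - φ.eval x0) / (x1 - x0)) / (x2 - x0) := by
  rw [integral_stdTri (by fun_prop)]
  have h1 : ∀ s : ℝ, ∫ t in (0 : ℝ)..(1 - s), φ.derivative.derivative.eval
        (x0 + ((s + t * Complex.I : ℂ).re : ℂ) * (x1 - x0)
          + ((s + t * Complex.I : ℂ).im : ℂ) * (x2 - x0)) =
      (φ.derivative.eval (x2 + s * (x1 - x2)) - φ.derivative.eval (x0 + s * (x1 - x0)))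
        / (x2 - x0) := by
    intro s
    have := integral_eval_derivative φ.derivative (x := x0 + s * (x1 - x0)) (sub_ne_zero.2 h02)
      (1 - s)
    rw [show x0 + s * (x1 - x0) + ((1 - s : ℝ) : ℂ) * (x2 - x0) = x2 + s * (x1 - x2) by
      push_cast; ring] at this
    rw [← this]
    simp
  simp_rw [h1]
  rw [intervalIntegral.integral_div, intervalIntegral.integral_sub
    (Continuous.intervalIntegrable (by fun_prop) _ _)
    (Continuous.intervalIntegrable (by fun_prop) _ _),
    integral_eval_derivative φ (sub_ne_zero.2 h12), integral_eval_derivative φ (sub_ne_zero.2 h01)]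
  simp

/-- Twice the signed area of the triangle, positive when `v 0, v 1, v 2` are counterclockwise. -/
noncomputable def dbl (v : Fin 3 → ℂ) : ℝ := (conj (v 1 - v 0) * (v 2 - v 0)).im

lemma image_stdTri (v : Fin 3 → ℂ) :
    (fun z : ℂ => v 0 + z.re * (v 1 - v 0) + z.im * (v 2 - v 0)) '' stdTri
      = convexHull ℝ (Set.range v) := by
  apply Set.Subset.antisymm
  · rintro _ ⟨z, ⟨h0, h1, h2⟩, rfl⟩
    refine mem_convexHull_of_exists_fintype ![1 - z.re - z.im, z.re, z.im] v ?_ ?_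
      (fun i => ⟨i, rfl⟩) ?_
    · intro i
      fin_cases i
      · simp only [Fin.zero_eta, Matrix.cons_val_zero]; linarith
      · simpa using h0
      · simpa using h1
    · simp [Fin.sum_univ_three]
      ring
    · simp [Fin.sum_univ_three]
      ring
  · refine convexHull_min ?_ ?_
    · rintro _ ⟨i, rfl⟩
      fin_cases i
      · exact ⟨0, by simp [stdTri], by simp⟩
      · exact ⟨1, by simp [stdTri], by simp⟩
      · exact ⟨Complex.I, by simp [stdTri], by simp⟩
    · rintro _ ⟨z, ⟨h0, h1, h2⟩, rfl⟩ _ ⟨w, ⟨k0, k1, k2⟩, rfl⟩ a b ha hb hab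
      refine ⟨a • z + b • w, ⟨?_, ?_, ?_⟩, ?_⟩
      · simp; positivity
      · simp; positivity
      · simp; nlinarith
      · have habC : (a : ℂ) + b = 1 := by exact_mod_cast hab
        simp
        linear_combination (-(v 0)) * habC

/-- Hermite's formula for the integral of a second derivative over a triangle, applied to a
polynomial in the linear form `z ↦ z - k z̄`. -/
lemma integral_triangle (v : Fin 3 → ℂ) (hD : dbl v ≠ 0) (k : ℂ) (φ : ℂ[X])
    (h01 : v 1 - k * conj (v 1) ≠ v 0 - k * conj (v 0))
    (h02 : v 2 - k * conj (v 2) ≠ v 0 - k * conj (v 0))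
    (h12 : v 1 - k * conj (v 1) ≠ v 2 - k * conj (v 2)) :
    ∫ z in convexHull ℝ (Set.range v), φ.derivative.derivative.eval (z - k * conj z) =
      |dbl v| * (((φ.eval (v 1 - k * conj (v 1)) - φ.eval (v 2 - k * conj (v 2))) /
          ((v 1 - k * conj (v 1)) - (v 2 - k * conj (v 2)))
        - (φ.eval (v 1 - k * conj (v 1)) - φ.eval (v 0 - k * conj (v 0))) /
          ((v 1 - k * conj (v 1)) - (v 0 - k * conj (v 0)))) /
        ((v 2 - k * conj (v 2)) - (v 0 - k * conj (v 0)))) := by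
  set L : ℂ →L[ℝ] ℂ := Complex.reCLM.smulRight (v 1 - v 0) + Complex.imCLM.smulRight (v 2 - v 0)
    with hL
  have hLz : ∀ z : ℂ, L z = z.re * (v 1 - v 0) + z.im * (v 2 - v 0) := by
    intro z; simp [hL]
  have hdet : L.det = dbl v := by
    rw [ContinuousLinearMap.det, ← LinearMap.det_toMatrix Complex.basisOneI, Matrix.det_fin_two]
    simp [LinearMap.toMatrix_apply, hLz, dbl]
    ring
  have hA : ∀ z ∈ stdTri, HasFDerivWithinAt
      (fun z : ℂ => v 0 + z.re * (v 1 - v 0) + z.im * (v 2 - v 0)) L stdTri z := by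
    intro z _
    have := (L.hasFDerivWithinAt (s := stdTri) (x := z)).const_add (v 0)
    refine this.congr (fun y _ => ?_) ?_ <;> simp only [hLz] <;> ring
  have hinj : Set.InjOn (fun z : ℂ => v 0 + z.re * (v 1 - v 0) + z.im * (v 2 - v 0)) stdTri := by
    have hLinj : Function.Injective L := by
      have : IsUnit (LinearMap.det (L : ℂ →ₗ[ℝ] ℂ)) := by
        rw [isUnit_iff_ne_zero]
        change L.det ≠ 0
        rw [hdet]; exact hD
      exact ((LinearMap.isUnit_iff_isUnit_det _).2 this |> (Module.End.isUnit_iff _).1).1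
    intro z _ w _ hzw
    apply hLinj
    simp only at hzw
    rw [hLz, hLz]
    linear_combination hzw
  rw [← image_stdTri, integral_image_eq_integral_abs_det_fderiv_smul volume
    isClosed_stdTri.measurableSet hA hinj, hdet, integral_smul, ← integral_stdTri_poly φ h01 h02 h12,
    Complex.real_smul]
  congr 2
  ext z
  congr 1
  simp only [map_add, map_sub, map_mul, Complex.conj_ofReal]
  ring

/-! ### Edge directions at the vertices -/

/-- If the rational functions `k ↦ ∑ aⱼ φ(Vⱼ - k V̄ⱼ) / (mⱼ - k)` vanish for all polynomials `φ`
and all but finitely many `k`, then the weights `aⱼ` cancel on each fibre of `j ↦ (Vⱼ, mⱼ)`. -/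
lemma sum_eq_zero_of_poles {J : Type*} [Fintype J] (a V m : J → ℂ) (B : Set ℂ) (hB : B.Finite)
    (h : ∀ k ∉ B, ∀ φ : ℂ[X], ∑ j, a j * (φ.eval (V j - k * conj (V j)) / (m j - k)) = 0)
    (f : ℂ → ℂ → ℂ) : ∑ j, a j * f (V j) (m j) = 0 := by
  classical
  have h1 : ∀ W n : ℂ, ∑ j with (V j, m j) = (W, n), a j = 0 := by
    intro W n
    -- the values of `k` at which some `Vⱼ - k V̄ⱼ` with `Vⱼ ≠ W` collides with `W - k W̄`
    set B' : Set ℂ := Set.range fun j => (W - V j) / conj (W - V j) with hB'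
    have hfin : (B ∪ B').Finite := hB.union (Set.finite_range _)
    have h2 : ∀ k ∉ B ∪ B', ∑ j with V j = W, a j * ((n - k) / (m j - k)) = 0 := by
      intro k hk
      have hk1 : k ∉ B := fun h => hk (Or.inl h)
      have hk2 : ∀ j, V j ≠ W → W - k * conj W ≠ V j - k * conj (V j) := by
        intro j hj he
        apply hk
        refine Or.inr ⟨j, ?_⟩
        have h3 : conj (W - V j) ≠ 0 := by
          rw [Ne, map_eq_zero]; exact sub_ne_zero.2 (Ne.symm hj)
        simp only
        rw [div_eq_iff h3, map_sub]
        linear_combination he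
      set S := (Finset.univ.image V).erase W
      set p : ℂ[X] := ∏ U ∈ S, (X - C (U - k * conj U)) with hp
      have hpW : p.eval (W - k * conj W) ≠ 0 := by
        rw [hp, eval_prod, Finset.prod_ne_zero_iff]
        intro U hU
        obtain ⟨hUW, hU⟩ := Finset.mem_erase.1 hU
        obtain ⟨j, _, rfl⟩ := Finset.mem_image.1 hU
        simpa [sub_eq_zero] using hk2 j hUW
      have hpV : ∀ j, V j ≠ W → p.eval (V j - k * conj (V j)) = 0 := by
        intro j hj
        rw [hp, eval_prod]
        refine Finset.prod_eq_zero (i := V j) (Finset.mem_erase.2 ⟨hj, ?_⟩) (by simp)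
        exact Finset.mem_image_of_mem _ (Finset.mem_univ _)
      have h3 := h k hk1 (C ((n - k) / p.eval (W - k * conj W)) * p)
      rw [← h3, Finset.sum_filter]
      refine Finset.sum_congr rfl fun j _ => ?_
      split_ifs with hj
      · rw [hj, eval_mul, eval_C, div_mul_cancel₀ _ hpW]
      · rw [eval_mul, hpV j hj]; simp
    have hlim : Tendsto (fun k => ∑ j with V j = W, a j * ((n - k) / (m j - k))) (𝓝[≠] n)
        (𝓝 (∑ j with V j = W, a j * if m j = n then 1 else 0)) := by
      refine tendsto_finsetSum _ fun j _ => Tendsto.const_mul _ ?_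
      split_ifs with hj
      · refine tendsto_const_nhds.congr' ?_
        filter_upwards [self_mem_nhdsWithin] with k hk
        rw [hj, div_self (sub_ne_zero.2 (Ne.symm hk))]
      · have h4 : ContinuousAt (fun k => (n - k) / (m j - k)) n :=
          ContinuousAt.div (by fun_prop) (by fun_prop) (sub_ne_zero.2 hj)
        have h5 := h4.tendsto
        simp only [sub_self, zero_div] at h5
        exact h5.mono_left nhdsWithin_le_nhds
    have hev : ∀ᶠ k in 𝓝[≠] n, k ∉ B ∪ B' := by
      have h6 : ((B ∪ B') \ {n})ᶜ ∈ 𝓝 n :=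
        (hfin.subset Set.sdiff_subset).isClosed.isOpen_compl.mem_nhds (by simp)
      filter_upwards [self_mem_nhdsWithin, mem_nhdsWithin_of_mem_nhds h6] with k hk1 hk2 hk3
      exact hk2 ⟨hk3, hk1⟩
    have h7 := tendsto_nhds_unique hlim
      (tendsto_const_nhds.congr' (hev.mono fun k hk => (h2 k hk).symm))
    rw [← h7]
    simp only [mul_ite, mul_one, mul_zero]
    rw [← Finset.sum_filter, Finset.filter_filter]
    simp [Prod.ext_iff]
  rw [← Finset.sum_fiberwise_of_maps_to (s := Finset.univ) (t := Finset.univ.image fun j => (V j, m j))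
    (g := fun j => (V j, m j)) (fun j hj => Finset.mem_image_of_mem _ hj)]
  refine Finset.sum_eq_zero fun q _ => ?_
  have h8 := h1 q.1 q.2
  rw [Finset.sum_congr rfl (g := fun j => a j * f q.1 q.2), ← Finset.sum_mul, h8, zero_mul]
  intro j hj
  rw [Finset.mem_filter] at hj
  rw [← hj.2]

/-- The direction of the line through two distinct points `u` and `w`, encoded as `e / ē` with
`e = u - w`, that is, as the square of a unit vector along the line. It does not depend on the
order of the two points. -/
noncomputable def slope2 (u w : ℂ) : ℂ := (u - w) / conj (u - w)

lemma dbl_ne_zero_imp {v : Fin 3 → ℂ} (h : dbl v ≠ 0) : v 1 ≠ v 0 ∧ v 2 ≠ v 0 ∧ v 1 ≠ v 2 := by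
  refine ⟨fun e => h ?_, fun e => h ?_, fun e => h ?_⟩
  · simp [dbl, e]
  · simp [dbl, e]
  · rw [dbl, e, ← Complex.normSq_eq_conj_mul_self, Complex.ofReal_im]

/-- The partial fraction expansion behind the passage from Hermite's formula to directions. -/
lemma hermite_aux {A B G c1 c2 c3 p0 p1 p2 : ℂ} (hA : A ≠ 0) (hB : B ≠ 0) (hG : G ≠ 0)
    (h1 : c1 ≠ 0) (h2 : c2 ≠ 0) (h3 : c3 ≠ 0) (hc : c3 = c1 - c2)
    (h : c3 * G = c1 * A - c2 * B) :
    ((p1 - p2) / (c3 * G) - (p1 - p0) / (c1 * A)) / (c2 * B) * (c1 * c2 * (B - A)) =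
      p0 / A - p0 / B + (p1 / G - p1 / A) + (p2 / B - p2 / G) := by
  have e1 : c1 * (B - A) / (c3 * G * B) = 1 / G - 1 / B := by
    field_simp
    linear_combination h - B * hc
  have e2 : ((p1 - p2) / (c3 * G) - (p1 - p0) / (c1 * A)) / (c2 * B) * (c1 * c2 * (B - A)) =
      (p1 - p2) * (c1 * (B - A) / (c3 * G * B)) - (p1 - p0) * (1 / A - 1 / B) := by
    field_simp
  rw [e2, e1]; ring

/-- A finite signed family of triangles whose integrals against every continuous function cancel.
Each vertex carries its two adjacent edge directions with opposite signs; these signed marks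
cancel in total. -/
lemma sum_marks_eq_zero {ι : Type*} [Fintype ι] (c : ι → ℝ) (v : ι → Fin 3 → ℂ)
    (hD : ∀ t, dbl (v t) ≠ 0)
    (h : ∀ f : ℂ → ℂ, Continuous f → ∑ t, c t * ∫ z in convexHull ℝ (Set.range (v t)), f z = 0)
    (f : ℂ → ℂ → ℂ) :
    ∑ t, ((c t * SignType.sign (dbl (v t)) : ℝ) : ℂ) * ∑ i : Fin 3,
      (f (v t i) (slope2 (v t i) (v t (i + 1))) - f (v t i) (slope2 (v t i) (v t (i + 2)))) = 0 := by
  set B : Set ℂ := Set.range fun p : ι × Fin 3 × Fin 3 => slope2 (v p.1 p.2.1) (v p.1 p.2.2)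
  have key : ∀ k ∉ B, ∀ φ : ℂ[X],
      ∑ j : ι × Fin 3 × Fin 2, (((c j.1 * SignType.sign (dbl (v j.1)) : ℝ) : ℂ) *
          ![1, -1] j.2.2) * (φ.eval (v j.1 j.2.1 - k * conj (v j.1 j.2.1)) /
          (![slope2 (v j.1 j.2.1) (v j.1 (j.2.1 + 1)), slope2 (v j.1 j.2.1) (v j.1 (j.2.1 + 2))] j.2.2
            - k)) = 0 := by
    intro k hk φ
    have h1 := h (fun z => φ.derivative.derivative.eval (z - k * conj z)) (by fun_prop)
    rw [Fintype.sum_prod_type]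
    rw [← mul_zero (2 * Complex.I), ← h1, Finset.mul_sum]
    refine Finset.sum_congr rfl fun t _ => ?_
    obtain ⟨n1, n2, n3⟩ := dbl_ne_zero_imp (hD t)
    have hne : ∀ i j : Fin 3, v t i ≠ v t j →
        conj (v t i - v t j) ≠ 0 ∧ slope2 (v t i) (v t j) - k ≠ 0 ∧
        (v t i - k * conj (v t i)) - (v t j - k * conj (v t j)) =
          conj (v t i - v t j) * (slope2 (v t i) (v t j) - k) := by
      intro i j hij
      have e1 : conj (v t i - v t j) ≠ 0 := by
        rw [Ne, map_eq_zero]; exact sub_ne_zero.2 hij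
      refine ⟨e1, fun e => hk ⟨(t, i, j), sub_eq_zero.1 e⟩, ?_⟩
      rw [slope2, mul_sub, mul_div_cancel₀ _ e1, map_sub]
      ring
    have symm : ∀ i j, slope2 (v t i) (v t j) = slope2 (v t j) (v t i) := by
      intro i j
      rw [slope2, slope2, ← neg_sub (v t j) (v t i), map_neg, neg_div_neg_eq]
    obtain ⟨a1, b1, x1⟩ := hne 1 0 n1
    obtain ⟨a2, b2, x2⟩ := hne 2 0 n2
    obtain ⟨a3, b3, x3⟩ := hne 1 2 n3
    rw [integral_triangle (v t) (hD t) k φ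
      (by rw [← sub_ne_zero, x1]; exact mul_ne_zero a1 b1)
      (by rw [← sub_ne_zero, x2]; exact mul_ne_zero a2 b2)
      (by rw [← sub_ne_zero, x3]; exact mul_ne_zero a3 b3), x1, x2, x3, Fintype.sum_prod_type]
    have hDc : 2 * Complex.I * (dbl (v t) : ℂ) =
        conj (v t 1 - v t 0) * conj (v t 2 - v t 0) *
          (slope2 (v t 2) (v t 0) - slope2 (v t 1) (v t 0)) := by
      have e1 : slope2 (v t 2) (v t 0) * conj (v t 2 - v t 0) = v t 2 - v t 0 :=
        div_mul_cancel₀ _ a2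
      have e2 : slope2 (v t 1) (v t 0) * conj (v t 1 - v t 0) = v t 1 - v t 0 :=
        div_mul_cancel₀ _ a1
      have e3 := Complex.sub_conj (conj (v t 1 - v t 0) * (v t 2 - v t 0))
      rw [map_mul, Complex.conj_conj] at e3
      rw [dbl]
      push_cast at e3
      linear_combination -e3 - conj (v t 1 - v t 0) * e1 + conj (v t 2 - v t 0) * e2
    have hsgn : (|dbl (v t)| : ℝ) = SignType.sign (dbl (v t)) * dbl (v t) :=
      (sign_mul_self _).symm
    have hm12 : conj (v t 1 - v t 2) * slope2 (v t 1) (v t 2) =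
        conj (v t 1 - v t 0) * slope2 (v t 1) (v t 0)
         - conj (v t 2 - v t 0) * slope2 (v t 2) (v t 0) := by
      rw [slope2, slope2, slope2, mul_div_cancel₀ _ a1, mul_div_cancel₀ _ a2, mul_div_cancel₀ _ a3]
      ring
    have hc : conj (v t 1 - v t 2) = conj (v t 1 - v t 0) - conj (v t 2 - v t 0) := by
      simp only [map_sub]; ring
    rw [hsgn]
    simp only [Fin.sum_univ_three, Fin.sum_univ_two]
    simp only [Matrix.cons_val_zero, Matrix.cons_val_one, zero_add,
      show (1 : Fin 3) + 1 = 2 from rfl, show (1 : Fin 3) + 2 = 0 from rfl,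
      show (2 : Fin 3) + 1 = 0 from rfl, show (2 : Fin 3) + 2 = 1 from rfl]
    rw [symm 0 1, symm 0 2, symm 2 1]
    push_cast
    generalize slope2 (v t 1) (v t 0) = m1 at *
    generalize slope2 (v t 2) (v t 0) = m2 at *
    generalize slope2 (v t 1) (v t 2) = m3 at *
    generalize conj (v t 1 - v t 0) = c1 at *
    generalize conj (v t 2 - v t 0) = c2 at *
    generalize conj (v t 1 - v t 2) = c3 at *
    generalize eval (v t 0 - k * conj (v t 0)) φ = p0 at *
    generalize eval (v t 1 - k * conj (v t 1)) φ = p1 at *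
    generalize eval (v t 2 - k * conj (v t 2)) φ = p2 at *
    have E := hermite_aux b1 b2 b3 a1 a2 a3 hc (G := m3 - k) (A := m1 - k) (B := m2 - k)
      (by rw [hc] at hm12 ⊢; linear_combination hm12) (p0 := p0) (p1 := p1) (p2 := p2)
    linear_combination (-((c t : ℂ) * (SignType.sign (dbl (v t)) : ℝ))) * E -
      ((c t : ℂ) * (SignType.sign (dbl (v t)) : ℝ)) *
        (((p1 - p2) / (c3 * (m3 - k)) - (p1 - p0) / (c1 * (m1 - k))) / (c2 * (m2 - k))) * hDc
  have := sum_eq_zero_of_poles _ _ _ B (Set.finite_range _) key f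
  rw [Fintype.sum_prod_type] at this
  rw [← this]
  refine Finset.sum_congr rfl fun t _ => ?_
  rw [Fintype.sum_prod_type, Finset.mul_sum]
  refine Finset.sum_congr rfl fun i _ => ?_
  simp [Fin.sum_univ_two]
  ring

/-! ### Galois conjugation of the plane -/

/-- A subfield `K` of `ℂ` stable under conjugation, together with an additive self-map `F` of `ℂ`
that is semilinear along `F|_K` and commutes with conjugation. The restriction `F|_K` is then a
field embedding of `K` into `ℂ`. -/
structure GaloisMap (K : Subfield ℂ) (F : ℂ →+ ℂ) : Prop where
  conj_mem : ∀ x ∈ K, conj x ∈ K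
  map_mul : ∀ x ∈ K, ∀ z, F (x * z) = F x * F z
  map_one : F 1 = 1
  map_conj : ∀ z, F (conj z) = conj (F z)

/-- The embedding `σ : ζ ↦ ζ ^ k` of `ℚ(ζ)` commutes with conjugation. Composing it with a
`ℚ(ζ)`-linear retraction of `ℂ` onto `ℚ(ζ)` extends it semilinearly to `ℂ`, and averaging with
the conjugated map makes the extension commute with conjugation. -/
lemma exists_galoisMap {M k : ℕ} (hM : M ≠ 0) (hk : k.Coprime M) {ζ : ℂ}
    (hζ : IsPrimitiveRoot ζ M) :
    ∃ (K : Subfield ℂ) (F : ℂ →+ ℂ), GaloisMap K F ∧ ζ ∈ K ∧ F ζ = ζ ^ k := by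
  have hintg : IsIntegral ℚ ζ := (hζ.isIntegral (Nat.pos_of_ne_zero hM)).tower_top
  set K := IntermediateField.adjoin ℚ {ζ} with hK
  have hζK : ζ ∈ K := IntermediateField.mem_adjoin_simple_self ℚ ζ
  have hroot : ζ ^ k ∈ (minpoly ℚ ζ).aroots ℂ := by
    rw [Polynomial.mem_aroots]
    refine ⟨minpoly.ne_zero hintg, ?_⟩
    have h1 : minpoly ℚ ζ = minpoly ℚ (ζ ^ k) := by
      have hpos := Nat.pos_of_ne_zero hM
      rw [← Polynomial.cyclotomic_eq_minpoly_rat hζ hpos,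
        ← Polynomial.cyclotomic_eq_minpoly_rat (hζ.pow_of_coprime k hk) hpos]
    rw [h1]; exact minpoly.aeval _ _
  let σ : K →ₐ[ℚ] ℂ := (IntermediateField.algHomAdjoinIntegralEquiv ℚ hintg).symm ⟨ζ ^ k, hroot⟩
  have hσ : σ ⟨ζ, hζK⟩ = ζ ^ k :=
    IntermediateField.algHomAdjoinIntegralEquiv_symm_apply_gen ℚ hintg ⟨ζ ^ k, hroot⟩
  have hnorm : ‖ζ‖ = 1 := Complex.norm_eq_one_of_pow_eq_one hζ.pow_eq_one hM
  have hinv : conj ζ = ζ⁻¹ := (Complex.inv_eq_conj hnorm).symm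
  have hinvk : conj (ζ ^ k) = (ζ ^ k)⁻¹ := by rw [map_pow, hinv, inv_pow]
  -- conjugation preserves `K` and commutes with `σ`, since both hold on the generator
  have hconj : ∀ x (hx : x ∈ K), ∃ hx' : conj x ∈ K, σ ⟨conj x, hx'⟩ = conj (σ ⟨x, hx⟩) := by
    intro x hx
    induction hx using IntermediateField.adjoin_induction with
    | mem x hx =>
      obtain rfl := Set.mem_singleton_iff.1 hx
      have h1 : conj x ∈ K := by rw [hinv]; exact inv_mem hζK
      refine ⟨h1, ?_⟩
      have h2 : (⟨conj x, h1⟩ : K) = (⟨x, hζK⟩ : K)⁻¹ := Subtype.ext hinv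
      rw [h2, map_inv₀, hσ, hinvk]
    | algebraMap q =>
      have h0 : algebraMap ℚ ℂ q ∈ K := K.algebraMap_mem q
      have h1 : conj (algebraMap ℚ ℂ q) = algebraMap ℚ ℂ q := by simp
      refine ⟨h1.symm ▸ h0, ?_⟩
      have h2 : (⟨conj (algebraMap ℚ ℂ q), h1.symm ▸ h0⟩ : K) = algebraMap ℚ K q := Subtype.ext h1
      have h3 : (⟨algebraMap ℚ ℂ q, h0⟩ : K) = algebraMap ℚ K q := rfl
      rw [h2, h3, AlgHom.commutes, h1]
    | add x y hx hy ihx ihy =>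
      obtain ⟨hx', ex⟩ := ihx
      obtain ⟨hy', ey⟩ := ihy
      have h1 : conj (x + y) ∈ K := by rw [map_add]; exact add_mem hx' hy'
      refine ⟨h1, ?_⟩
      have h2 : (⟨conj (x + y), h1⟩ : K) = ⟨conj x, hx'⟩ + ⟨conj y, hy'⟩ :=
        Subtype.ext (map_add _ _ _)
      have h3 : (⟨x + y, add_mem hx hy⟩ : K) = ⟨x, hx⟩ + ⟨y, hy⟩ := rfl
      rw [h2, h3, map_add, map_add, map_add, ex, ey]
    | inv x hx ihx =>
      obtain ⟨hx', ex⟩ := ihx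
      have h1 : conj x⁻¹ ∈ K := by rw [map_inv₀]; exact inv_mem hx'
      refine ⟨h1, ?_⟩
      have h2 : (⟨conj x⁻¹, h1⟩ : K) = (⟨conj x, hx'⟩ : K)⁻¹ := Subtype.ext (map_inv₀ _ _)
      have h3 : (⟨x⁻¹, inv_mem hx⟩ : K) = (⟨x, hx⟩ : K)⁻¹ := rfl
      rw [h2, h3, map_inv₀, map_inv₀, map_inv₀, ex]
    | mul x y hx hy ihx ihy =>
      obtain ⟨hx', ex⟩ := ihx
      obtain ⟨hy', ey⟩ := ihy
      have h1 : conj (x * y) ∈ K := by rw [map_mul]; exact mul_mem hx' hy'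
      refine ⟨h1, ?_⟩
      have h2 : (⟨conj (x * y), h1⟩ : K) = ⟨conj x, hx'⟩ * ⟨conj y, hy'⟩ :=
        Subtype.ext (map_mul _ _ _)
      have h3 : (⟨x * y, mul_mem hx hy⟩ : K) = ⟨x, hx⟩ * ⟨y, hy⟩ := rfl
      rw [h2, h3, map_mul, map_mul, map_mul, ex, ey]
  -- a `K`-linear retraction of `ℂ` onto `K`
  obtain ⟨p, hp⟩ := (Algebra.linearMap K ℂ).exists_leftInverse_of_injective
    (LinearMap.ker_eq_bot.2 (algebraMap K ℂ).injective)
  have hp' : ∀ x : K, p (x : ℂ) = x := fun x => LinearMap.congr_fun hp x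
  have hpm : ∀ (x : K) z, p ((x : ℂ) * z) = x * p z := fun x z => by
    have := p.map_smul x z
    rwa [Algebra.smul_def, smul_eq_mul] at this
  -- symmetrised, so that it commutes with conjugation, then followed by `σ`
  let F : ℂ →+ ℂ :=
    { toFun := fun z => (σ (p z) + conj (σ (p (conj z)))) / 2
      map_zero' := by simp
      map_add' := fun x y => by simp only [map_add]; ring }
  have hF : ∀ z, F z = (σ (p z) + conj (σ (p (conj z)))) / 2 := fun _ => rfl
  have hFK : ∀ x (hx : x ∈ K), F x = σ ⟨x, hx⟩ := by
    intro x hx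
    obtain ⟨hx', ex⟩ := hconj x hx
    rw [hF, hp' ⟨x, hx⟩, hp' ⟨conj x, hx'⟩, ex, Complex.conj_conj]
    ring
  refine ⟨K.toSubfield, F, ⟨fun x hx => (hconj x hx).1, ?_, ?_, ?_⟩, hζK, by rw [hFK ζ hζK, hσ]⟩
  · intro x hx z
    obtain ⟨hx', ex⟩ := hconj x hx
    rw [hFK x hx, hF, hF, map_mul conj x z, hpm ⟨x, hx⟩, hpm ⟨conj x, hx'⟩, map_mul σ, map_mul σ,
      map_mul conj, ex, Complex.conj_conj]
    ring
  · rw [hFK 1 (one_mem K)]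
    exact map_one σ
  · intro z
    rw [hF, hF, Complex.conj_conj, map_div₀, map_add, Complex.conj_conj, map_ofNat]
    ring

/-! ### The conjugate area of a tiling -/

lemma GaloisMap.map_pow {K : Subfield ℂ} {F : ℂ →+ ℂ} (h : GaloisMap K F) {x : ℂ} (hx : x ∈ K)
    (n : ℕ) : F (x ^ n) = F x ^ n := by
  induction n with
  | zero => simp [h.map_one]
  | succ n ih => rw [pow_succ', h.map_mul x hx, ih, pow_succ']

lemma GaloisMap.map_inv {K : Subfield ℂ} {F : ℂ →+ ℂ} (h : GaloisMap K F) {x : ℂ} (hx : x ∈ K) :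
    F x⁻¹ = (F x)⁻¹ := by
  by_cases h0 : x = 0
  · simp [h0]
  · refine eq_inv_of_mul_eq_one_right ?_
    rw [← h.map_mul x hx, mul_inv_cancel₀ h0, h.map_one]

lemma slope2_mul {u w : ℂ} (h : u ≠ w) : slope2 u w * conj (u - w) = u - w :=
  div_mul_cancel₀ _ (by rw [Ne, map_eq_zero]; exact sub_ne_zero.2 h)

lemma slope2_comm (u w : ℂ) : slope2 u w = slope2 w u := by
  rw [slope2, slope2, ← neg_sub w u, _root_.map_neg, neg_div_neg_eq]

/-- The weight of the mark consisting of the vertex `V` and the edge direction `m`. Its signed sum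
over the marks of a triangle with edges `e₁ = v₁ - v₀` and `e₂ = v₂ - v₀` and all directions in `K`
is `F ē₁ F e₂ - F e₁ F ē₂`, which is `4i` times the signed area of the image triangle. -/
noncomputable def wt (K : Subfield ℂ) (F : ℂ →+ ℂ) (V m : ℂ) : ℂ :=
  open Classical in if m ∈ K then (F V - F m * F (conj V)) * F (conj V) else 0

/-- The signed sum of `wt` over the marks of a triangle whose shape parameter
`ρ = (v₂ - v₀) / (v₁ - v₀)` lies in `K`. -/
lemma sum_wt {K : Subfield ℂ} {F : ℂ →+ ℂ} (h : GaloisMap K F) {v : Fin 3 → ℂ} (hD : dbl v ≠ 0)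
    {ρ : ℂ} (hρK : ρ ∈ K) (hρ : v 2 - v 0 = ρ * (v 1 - v 0)) :
    ∑ i : Fin 3, (wt K F (v i) (slope2 (v i) (v (i + 1))) - wt K F (v i) (slope2 (v i) (v (i + 2))))
      = open Classical in if slope2 (v 1) (v 0) ∈ K then
          (Complex.normSq (F (v 1 - v 0)) : ℂ) * (F ρ - conj (F ρ)) else 0 := by
  obtain ⟨n1, n2, n3⟩ := dbl_ne_zero_imp hD
  have hρ0 : ρ ≠ 0 := by
    rintro rfl
    rw [zero_mul] at hρ
    exact n2 (sub_eq_zero.1 hρ)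
  have hρ1 : ρ - 1 ≠ 0 := by
    intro e
    rw [sub_eq_zero] at e
    rw [e, one_mul, sub_left_inj] at hρ
    exact n3 hρ.symm
  have c0 : conj ρ ≠ 0 := by rwa [Ne, map_eq_zero]
  have c1 : conj (ρ - 1) ≠ 0 := by rwa [Ne, map_eq_zero]
  have s2 : slope2 (v 2) (v 0) = ρ / conj ρ * slope2 (v 1) (v 0) := by
    rw [slope2, slope2, hρ, _root_.map_mul, mul_div_mul_comm]
  have s3 : slope2 (v 1) (v 2) = (ρ - 1) / conj (ρ - 1) * slope2 (v 1) (v 0) := by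
    have e : v 2 - v 1 = (ρ - 1) * (v 1 - v 0) := by linear_combination hρ
    rw [slope2_comm, slope2, slope2, e, _root_.map_mul, mul_div_mul_comm]
  have k2 : ρ / conj ρ ∈ K := div_mem hρK (h.conj_mem ρ hρK)
  have k3 : (ρ - 1) / conj (ρ - 1) ∈ K := by
    have := sub_mem hρK (one_mem K)
    exact div_mem this (h.conj_mem _ this)
  have mem_iff : ∀ x y : ℂ, x ∈ K → x ≠ 0 → (x * y ∈ K ↔ y ∈ K) := fun x y hx h0 =>
    ⟨fun hxy => by simpa [h0] using mul_mem (inv_mem hx) hxy, fun hy => mul_mem hx hy⟩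
  have i2 : slope2 (v 2) (v 0) ∈ K ↔ slope2 (v 1) (v 0) ∈ K := by
    rw [s2]; exact mem_iff _ _ k2 (div_ne_zero hρ0 c0)
  have i3 : slope2 (v 1) (v 2) ∈ K ↔ slope2 (v 1) (v 0) ∈ K := by
    rw [s3]; exact mem_iff _ _ k3 (div_ne_zero hρ1 c1)
  simp only [Fin.sum_univ_three, zero_add,
    show (1 : Fin 3) + 1 = 2 from rfl, show (1 : Fin 3) + 2 = 0 from rfl,
    show (2 : Fin 3) + 1 = 0 from rfl, show (2 : Fin 3) + 2 = 1 from rfl]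
  rw [slope2_comm (v 0) (v 1), slope2_comm (v 0) (v 2), slope2_comm (v 2) (v 1)]
  -- one direction lies in `K` if and only if all three do
  by_cases hK : slope2 (v 1) (v 0) ∈ K
  · have hK2 := i2.2 hK
    have hK3 := i3.2 hK
    have f1 : F (slope2 (v 1) (v 0)) * (F (conj (v 1)) - F (conj (v 0))) = F (v 1) - F (v 0) := by
      rw [← map_sub, ← map_sub, ← map_sub, ← h.map_mul _ hK, slope2_mul n1]
    have f2 : F (slope2 (v 2) (v 0)) * (F (conj (v 2)) - F (conj (v 0))) = F (v 2) - F (v 0) := by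
      rw [← map_sub, ← map_sub, ← map_sub, ← h.map_mul _ hK2, slope2_mul n2]
    have f3 : F (slope2 (v 1) (v 2)) * (F (conj (v 1)) - F (conj (v 2))) = F (v 1) - F (v 2) := by
      rw [← map_sub, ← map_sub, ← map_sub, ← h.map_mul _ hK3, slope2_mul n3]
    have g1 : F (v 2) - F (v 0) = F ρ * (F (v 1) - F (v 0)) := by
      rw [← map_sub, ← map_sub, ← h.map_mul _ hρK, hρ]
    have g2 : F (conj (v 2)) - F (conj (v 0)) = conj (F ρ) * (F (conj (v 1)) - F (conj (v 0))) := by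
      simp only [h.map_conj]
      rw [← map_sub, ← map_sub, ← map_sub, ← map_sub, ← _root_.map_mul, ← h.map_mul _ hρK, hρ]
    have g3 : (Complex.normSq (F (v 1 - v 0)) : ℂ) =
        (F (v 1) - F (v 0)) * (F (conj (v 1)) - F (conj (v 0))) := by
      rw [← Complex.mul_conj, ← h.map_conj, map_sub, map_sub, map_sub]
    simp only [wt, hK, hK2, hK3, if_true]
    rw [g3]
    linear_combination (F (conj (v 1)) + F (conj (v 0))) * f1
      - (F (conj (v 2)) + F (conj (v 0))) * f2 - (F (conj (v 1)) + F (conj (v 2))) * f3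
      + (F (conj (v 1)) - F (conj (v 0))) * g1 - (F (v 1) - F (v 0)) * g2
  · simp [wt, hK, i2, i3]

/-- The conjugate area identity. The triangles `v t` have shape parameter `ρ₀` or `ρ̄₀` according
to their orientation, and integrate like the fan of `N` triangles `0, ω ^ j, ω ^ (j + 1)`. The factor
`X` is the sum of `|F e|²` over the tiles with edge directions in `K`, where `e` is the edge from
vertex `0` to vertex `1`. It is nonnegative because `F` commutes with conjugation, so that the
image of a tile under `F` has shape parameter `F ρ₀` or its conjugate. -/
lemma conjugate_area {K : Subfield ℂ} {F : ℂ →+ ℂ} (h : GaloisMap K F) {N m : ℕ}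
    {ω ρ₀ : ℂ} (hω : ω ∈ K) (hω1 : ‖ω‖ = 1) (hω0 : 0 < ω.im) (hρ₀ : ρ₀ ∈ K)
    (v : Fin m → Fin 3 → ℂ)
    (hv : ∀ t, (0 < dbl (v t) ∧ v t 2 - v t 0 = ρ₀ * (v t 1 - v t 0)) ∨
      (dbl (v t) < 0 ∧ v t 2 - v t 0 = conj ρ₀ * (v t 1 - v t 0)))
    (hintg : ∀ f : ℂ → ℂ, Continuous f → ∑ t, ∫ z in convexHull ℝ (Set.range (v t)), f z =
      ∑ j : Fin N, ∫ z in convexHull ℝ (Set.range ![0, ω ^ (j : ℕ), ω ^ ((j : ℕ) + 1)]), f z) :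
    ∃ X : ℝ, 0 ≤ X ∧ X * (F ρ₀).im = N * (F ω).im := by
  classical
  have hωc : conj ω * ω = 1 := by
    rw [← Complex.normSq_eq_conj_mul_self, Complex.normSq_eq_norm_sq, hω1]; simp
  have hdw : ∀ j : ℕ, dbl ![0, ω ^ j, ω ^ (j + 1)] = ω.im := by
    intro j
    have e : conj (ω ^ j) * ω ^ (j + 1) = ω := by
      rw [pow_succ, ← mul_assoc, _root_.map_pow, ← mul_pow, hωc, one_pow, one_mul]
    change (conj (ω ^ j - 0) * (ω ^ (j + 1) - 0)).im = ω.im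
    rw [sub_zero, sub_zero, e]
  have hF1 : Complex.normSq (F ω) = 1 := by
    have e : conj (F ω) * F ω = 1 := by
      rw [← h.map_conj, ← h.map_mul _ (h.conj_mem _ hω), hωc, h.map_one]
    rw [← Complex.normSq_eq_conj_mul_self] at e
    exact_mod_cast e
  have key := sum_marks_eq_zero (ι := Fin m ⊕ Fin N)
    (Sum.elim (fun _ => 1) fun _ => -1)
    (Sum.elim v fun j => ![0, ω ^ (j : ℕ), ω ^ ((j : ℕ) + 1)])
    (by
      rintro (t | j)
      · rcases hv t with hh | hh
        · exact hh.1.ne'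
        · exact hh.1.ne
      · simp only [Sum.elim_inr, hdw]; exact hω0.ne')
    (by
      intro f hf
      rw [Fintype.sum_sum_type]
      simp only [Sum.elim_inl, Sum.elim_inr, Complex.ofReal_one, one_mul, Complex.ofReal_neg,
        neg_mul, Finset.sum_neg_distrib]
      rw [hintg f hf]; ring)
    (wt K F)
  rw [Fintype.sum_sum_type] at key
  simp only [Sum.elim_inl, Sum.elim_inr] at key
  have hT : ∀ t, (((1 : ℝ) * SignType.sign (dbl (v t)) : ℝ) : ℂ) * ∑ i : Fin 3,
      (wt K F (v t i) (slope2 (v t i) (v t (i + 1))) - wt K F (v t i) (slope2 (v t i) (v t (i + 2))))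
      = ((if slope2 (v t 1) (v t 0) ∈ K then Complex.normSq (F (v t 1 - v t 0)) else 0 : ℝ) : ℂ) *
        ((2 * (F ρ₀).im : ℝ) * Complex.I) := by
    intro t
    rw [← Complex.sub_conj]
    rcases hv t with ⟨h1, h2⟩ | ⟨h1, h2⟩
    · rw [sum_wt h h1.ne' hρ₀ h2, sign_pos h1]
      split_ifs <;> simp
    · rw [sum_wt h h1.ne (h.conj_mem _ hρ₀) h2, sign_neg h1, h.map_conj]
      split_ifs <;> simp
      ring
  have hW : ∀ j : Fin N, ((((-1 : ℝ) * SignType.sign (dbl ![0, ω ^ (j : ℕ), ω ^ ((j : ℕ) + 1)]) : ℝ) : ℂ) *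
      ∑ i : Fin 3, (wt K F (![0, ω ^ (j : ℕ), ω ^ ((j : ℕ) + 1)] i)
        (slope2 (![0, ω ^ (j : ℕ), ω ^ ((j : ℕ) + 1)] i) (![0, ω ^ (j : ℕ), ω ^ ((j : ℕ) + 1)] (i + 1)))
        - wt K F (![0, ω ^ (j : ℕ), ω ^ ((j : ℕ) + 1)] i)
        (slope2 (![0, ω ^ (j : ℕ), ω ^ ((j : ℕ) + 1)] i) (![0, ω ^ (j : ℕ), ω ^ ((j : ℕ) + 1)] (i + 2)))))
      = -((2 * (F ω).im : ℝ) * Complex.I) := by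
    intro j
    have e1 : slope2 (ω ^ (j : ℕ)) 0 ∈ K := by
      rw [slope2, sub_zero]
      have := pow_mem hω (j : ℕ)
      exact div_mem this (h.conj_mem _ this)
    rw [sum_wt h (v := ![0, ω ^ (j : ℕ), ω ^ ((j : ℕ) + 1)]) (by rw [hdw]; exact hω0.ne') hω
      (by simp [pow_succ']), hdw, sign_pos hω0, ← Complex.sub_conj]
    simp [e1, h.map_pow hω, hF1]
  rw [Finset.sum_congr rfl fun t _ => hT t, Finset.sum_congr rfl fun j _ => hW j,
    ← Finset.sum_mul, ← Complex.ofReal_sum] at key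
  refine ⟨∑ t, if slope2 (v t 1) (v t 0) ∈ K then Complex.normSq (F (v t 1 - v t 0)) else 0,
    Finset.sum_nonneg fun t _ => ?_, ?_⟩
  · split_ifs
    · exact Complex.normSq_nonneg _
    · exact le_rfl
  · generalize (∑ t, if slope2 (v t 1) (v t 0) ∈ K then Complex.normSq (F (v t 1 - v t 0)) else 0) = X
      at key
    have := congrArg Complex.im key
    simp at this
    linarith

/-! ### Cosine sums under Galois conjugation -/

/-- Units modulo `L` lift to units modulo a multiple `M` of `L`. -/
lemma exists_coprime_lift {L M k : ℕ} (hM : M ≠ 0) (hLM : L ∣ M) (hk : k.Coprime L) :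
    ∃ k' : ℕ, k'.Coprime M ∧ k' ≡ k [MOD L] := by
  have : NeZero M := ⟨hM⟩
  obtain ⟨u, hu⟩ := ZMod.unitsMap_surjective hLM (ZMod.unitOfCoprime k hk)
  refine ⟨(u : ZMod M).val, ZMod.val_coe_unit_coprime u, ?_⟩
  rw [← ZMod.natCast_eq_natCast_iff]
  have h := congrArg (fun x : (ZMod L)ˣ => (x : ZMod L)) hu
  simp only [ZMod.unitsMap_def, Units.coe_map, ZMod.coe_unitOfCoprime] at h
  rw [← h]
  simp [ZMod.castHom_apply, ZMod.natCast_val]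

/-- If `ω ^ L ≠ 1`, let `p` be the least prime factor of its order. Some power `u` of `ω ^ L` is a
nontrivial `p`-th root of unity such that `ω u ^ t` is an `h`-th power of `ω` with `h ≡ 1` modulo
`L` and `h` prime to `M`, for all `t < p` with at most one exception. These `p` numbers sum to zero,
while all of them but one would have real part above `1 / 2`. The exception needs `p ∤ L`, so
`p ≥ 3` because `L` is even. -/
lemma pow_eq_one_of_re_gt {M L : ℕ} (hM : M ≠ 0) (hL : 2 ∣ L) {ω : ℂ} (hω : ω ^ M = 1)
    (h : ∀ h : ℕ, h.Coprime M → h ≡ 1 [MOD L] → 1 / 2 < (ω ^ h).re) : ω ^ L = 1 := by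
  by_contra hg
  have hgM : (ω ^ L) ^ M = 1 := by rw [← pow_mul, mul_comm, pow_mul, hω, one_pow]
  set g := ω ^ L with hgdef
  set E := orderOf g with hE
  have hE0 : 0 < E := orderOf_pos_iff.2 (isOfFinOrder_iff_pow_eq_one.2 ⟨M, Nat.pos_of_ne_zero hM, hgM⟩)
  have hE1 : E ≠ 1 := fun h1 => hg (orderOf_eq_one_iff.1 h1)
  set p := E.minFac with hpdef
  have hp : p.Prime := Nat.minFac_prime hE1
  have hpE : p ∣ E := Nat.minFac_dvd E
  -- the factor `Q` makes `1 + L t J` prime to every prime divisor of `M` other than `p`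
  set Q := ∏ q ∈ M.primeFactors.erase p, q with hQ
  set J := (E / p) * Q with hJ
  set u := g ^ J with hu
  have hpQ : ¬ p ∣ Q := by
    intro hd
    obtain ⟨q, hq, hd⟩ := (Prime.dvd_finsetProd_iff hp.prime _).1 hd
    have hq' := Finset.mem_erase.1 hq
    exact hq'.1 ((Nat.prime_dvd_prime_iff_eq hp (Nat.prime_of_mem_primeFactors hq'.2)).1 hd).symm
  have hup : u ^ p = 1 := by
    rw [hu, ← pow_mul]
    apply orderOf_dvd_iff_pow_eq_one.1
    rw [← hE, hJ]
    refine ⟨Q, ?_⟩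
    calc E / p * Q * p = (E / p * p) * Q := by ring
      _ = E * Q := by rw [Nat.div_mul_cancel hpE]
  have hu1 : u ≠ 1 := by
    intro hu1
    have hd : E ∣ E / p * Q := orderOf_dvd_iff_pow_eq_one.2 hu1
    have h2 : E / p * p ∣ E / p * Q := by rwa [Nat.div_mul_cancel hpE]
    exact hpQ (Nat.dvd_of_mul_dvd_mul_left (Nat.div_pos (Nat.le_of_dvd hE0 hpE) hp.pos) h2)
  have hsum : ∑ t ∈ Finset.range p, ω * u ^ t = 0 := by
    rw [← Finset.mul_sum]
    have := geom_sum_mul u p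
    rw [hup, sub_self] at this
    rcases mul_eq_zero.1 this with h0 | h0
    · rw [h0, mul_zero]
    · exact absurd (sub_eq_zero.1 h0) hu1
  have hre : ∑ t ∈ Finset.range p, (ω * u ^ t).re = 0 := by
    rw [← Complex.re_sum, hsum, Complex.zero_re]
  have hωt : ∀ t : ℕ, ω ^ (1 + L * (t * J)) = ω * u ^ t := by
    intro t
    rw [hu, hgdef, ← pow_mul, ← pow_mul, pow_add, pow_one, mul_comm t J, mul_assoc]
  have hgood : ∀ t : ℕ, ¬ p ∣ 1 + L * (t * J) → 1 / 2 < (ω * u ^ t).re := by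
    intro t ht
    rw [← hωt t]
    refine h _ ?_ ?_
    · apply Nat.coprime_of_dvd
      intro q hq hq1 hqM
      by_cases hqp : q = p
      · exact ht (hqp ▸ hq1)
      · have : q ∣ Q := Finset.dvd_prod_of_mem (fun q => q)
          (Finset.mem_erase.2 ⟨hqp, Nat.mem_primeFactors.2 ⟨hq, hqM, hM⟩⟩)
        have h3 : q ∣ L * (t * J) := ((this.mul_left _).mul_left t).mul_left L
        exact hq.one_lt.ne' (Nat.dvd_one.1 ((Nat.dvd_add_left h3).1 hq1))
    · simp [Nat.ModEq]
  by_cases hbad : ∃ t0 ∈ Finset.range p, p ∣ 1 + L * (t0 * J)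
  · obtain ⟨t0, ht0, hd0⟩ := hbad
    have hpL : ¬ p ∣ L * J := by
      intro hd
      have h3 : p ∣ L * (t0 * J) := by
        have := hd.mul_left t0
        rwa [show t0 * (L * J) = L * (t0 * J) by ring] at this
      exact hp.one_lt.ne' (Nat.dvd_one.1 ((Nat.dvd_add_left h3).1 hd0))
    have hp3 : 3 ≤ p := by
      rcases hp.two_le.lt_or_eq with h2 | h2
      · exact h2
      · exact absurd ((h2 ▸ hL).mul_right J) hpL
    rw [← Finset.add_sum_erase _ _ ht0] at hre
    have hlt : ∑ t ∈ (Finset.range p).erase t0, (1 / 2 : ℝ)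
        < ∑ t ∈ (Finset.range p).erase t0, (ω * u ^ t).re := by
      refine Finset.sum_lt_sum_of_nonempty (Finset.card_pos.1 ?_) fun t ht => ?_
      · rw [Finset.card_erase_of_mem ht0, Finset.card_range]; omega
      obtain ⟨hne, htr⟩ := Finset.mem_erase.1 ht
      refine hgood t fun hd => hne ?_
      have hz : (p : ℤ) ∣ (L * J : ℕ) * ((t : ℤ) - t0) := by
        have h9 := dvd_sub (Int.natCast_dvd_natCast.2 hd) (Int.natCast_dvd_natCast.2 hd0)
        have h10 : ((1 + L * (t * J) : ℕ) : ℤ) - (1 + L * (t0 * J) : ℕ)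
            = (L * J : ℕ) * ((t : ℤ) - t0) := by push_cast; ring
        rwa [h10] at h9
      rcases (Nat.prime_iff_prime_int.1 hp).dvd_or_dvd hz with h4 | h4
      · exact absurd (Int.natCast_dvd_natCast.1 h4) hpL
      · have h5 := Finset.mem_range.1 htr
        have h6 := Finset.mem_range.1 ht0
        have := Int.eq_zero_of_abs_lt_dvd h4 (by rw [abs_lt]; constructor <;> omega)
        omega
    rw [Finset.sum_const, Finset.card_erase_of_mem ht0, Finset.card_range, nsmul_eq_mul,
      Nat.cast_sub hp.one_le] at hlt
    have hωn : ‖ω‖ = 1 := Complex.norm_eq_one_of_pow_eq_one hω hM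
    have hun : ‖u‖ = 1 := Complex.norm_eq_one_of_pow_eq_one hup hp.ne_zero
    have hn : ‖ω * u ^ t0‖ = 1 := by rw [norm_mul, norm_pow, hωn, hun]; simp
    have h7 := (abs_le.1 (Complex.abs_re_le_norm (ω * u ^ t0))).1
    rw [hn] at h7
    have h8 : (3 : ℝ) ≤ p := by exact_mod_cast hp3
    push_cast at hlt
    linarith
  · push Not at hbad
    have : 0 < ∑ t ∈ Finset.range p, (ω * u ^ t).re :=
      Finset.sum_pos (fun t ht => by linarith [hgood t (hbad t ht)])
        ⟨0, Finset.mem_range.2 hp.pos⟩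
    linarith

/-- A rational angle `θ` in `(-π, π)` with `cos (k θ) + cos (2πk / N) > 0` for all `k` coprime to
a common denominator `M` vanishes. First `θ ∈ (2π / L) ℤ` with `L = lcm (2, N)`, by
`pow_eq_one_of_re_gt`. Then units `k` modulo `L` for which `2πk / N` is nearly `π` force `k θ` to
be so close to `2πℤ` that `θ = 0`. -/
lemma theta_eq_zero {N M : ℕ} (hN : 10 < N) (hM : M ≠ 0) (hNM : 2 * N ∣ M) {θ : ℝ}
    (hθ : |θ| < π) {c : ℤ} (hc : θ * M = 2 * π * c)
    (H : ∀ k : ℕ, k.Coprime M → 0 < cos (k * θ) + cos (2 * π * k / N)) : θ = 0 := by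
  have hN0 : (0 : ℝ) < N := by exact_mod_cast (by omega : 0 < N)
  have hN11 : (11 : ℝ) ≤ N := by exact_mod_cast hN
  have hπ := Real.pi_pos
  set ω : ℂ := Complex.exp (θ * Complex.I) with hω
  have hωk : ∀ k : ℕ, (ω ^ k).re = cos (k * θ) := by
    intro k
    rw [hω, ← Complex.exp_nat_mul, ← mul_assoc]
    have := Complex.exp_ofReal_mul_I_re (k * θ)
    push_cast at this
    exact this
  have hωM : ω ^ M = 1 := by
    rw [hω, ← Complex.exp_nat_mul, Complex.exp_eq_one_iff]
    refine ⟨c, ?_⟩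
    have : (θ : ℂ) * M = 2 * π * c := by exact_mod_cast hc
    linear_combination Complex.I * this
  -- `cos (2 π k / N)` depends only on `k` modulo `N`
  have hcosN : ∀ k k' : ℕ, k' ≡ k [MOD N] → cos (2 * π * k' / N) = cos (2 * π * k / N) := by
    intro k k' hk
    obtain ⟨d, hd⟩ := (Nat.modEq_iff_dvd.1 hk)
    have hd' : (k : ℝ) - k' = N * d := by exact_mod_cast hd
    have : 2 * π * k / N = 2 * π * k' / N + d * (2 * π) := by
      field_simp
      linear_combination hd'
    rw [this, Real.cos_add_int_mul_two_pi]
  -- for an even multiple `L` of `N`, a unit `k₀` modulo `L` with `cos (2πk₀ / N) ≤ -1 / 2` makes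
  -- the real parts of all conjugates `ω ^ (k₀ h)`, `h ≡ 1` modulo `L`, exceed `1 / 2`
  have key : ∀ L k0 : ℕ, 2 ∣ L → N ∣ L → L ∣ M → k0.Coprime L →
      cos (2 * π * k0 / N) ≤ - (1 / 2) → ω ^ L = 1 ∧
      ∀ k : ℕ, k.Coprime L → 0 < cos (k * θ) + cos (2 * π * k / N) := by
    intro L k0 h2L hNL hLM hk0 hcos
    have h1 : ω ^ L = 1 := by
      obtain ⟨k1, hk1, hk1'⟩ := exists_coprime_lift hM hLM hk0
      have h2 : (ω ^ k1) ^ L = 1 := by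
        refine pow_eq_one_of_re_gt hM h2L (by rw [← pow_mul, mul_comm, pow_mul, hωM, one_pow]) ?_
        intro h hhM hhL
        have h3 := H (k1 * h) (hk1.mul_left hhM)
        rw [hcosN k0 (k1 * h)] at h3
        · rw [← pow_mul, hωk]
          linarith
        · simpa using (hk1'.mul hhL).of_dvd hNL
      rw [← pow_mul] at h2
      have h4 : orderOf ω ∣ k1 * L := orderOf_dvd_of_pow_eq_one h2
      have h5 : orderOf ω ∣ M := orderOf_dvd_of_pow_eq_one hωM
      exact orderOf_dvd_iff_pow_eq_one.1
        ((Nat.Coprime.coprime_dvd_left h5 hk1.symm).dvd_of_dvd_mul_left h4)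
    refine ⟨h1, fun k hk => ?_⟩
    obtain ⟨k', hk', hkk'⟩ := exists_coprime_lift hM hLM hk
    have h3 := H k' hk'
    rw [hcosN k k' (hkk'.of_dvd hNL), ← hωk] at h3
    have h6 : ω ^ k' = ω ^ k := by
      rw [pow_eq_pow_mod k' h1, pow_eq_pow_mod k h1, hkk']
    rwa [h6, hωk] at h3
  have exc : ∀ L : ℕ, ω ^ L = 1 → ∃ c : ℤ, θ * L = 2 * π * c := by
    intro L hL
    rw [hω, ← Complex.exp_nat_mul, Complex.exp_eq_one_iff] at hL
    obtain ⟨c, hc⟩ := hL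
    refine ⟨c, ?_⟩
    have h1 : Complex.I * ((θ : ℂ) * L) = Complex.I * (2 * π * c) := by linear_combination hc
    exact_mod_cast mul_left_cancel₀ Complex.I_ne_zero h1
  -- a multiple of `2π / L` whose cosine exceeds `cos (2π s / L)` is close to `2πℤ`
  have coslt : ∀ (L s k : ℕ) (c : ℤ), 0 < L → 2 * s ≤ L → θ * L = 2 * π * c →
      cos (2 * π * s / L) < cos (k * θ) → ∃ e : ℤ, |k * c - L * e| < s := by
    intro L s k c hL hs hc hlt
    have hL' : (0 : ℝ) < L := by exact_mod_cast hL
    have hs' : (2 : ℝ) * s ≤ L := by exact_mod_cast hs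
    set e := toIocDiv Real.two_pi_pos (-π) (k * θ) with he
    set r := toIocMod Real.two_pi_pos (-π) (k * θ) with hr
    have hm : r ∈ Set.Ioc (-π) (-π + 2 * π) := toIocMod_mem_Ioc Real.two_pi_pos (-π) (k * θ)
    have hre : k * θ = r + e * (2 * π) := by
      have h1 := self_sub_toIocDiv_zsmul Real.two_pi_pos (-π) (k * θ)
      rw [zsmul_eq_mul, ← he, ← hr] at h1
      linarith
    rw [hre, Real.cos_add_int_mul_two_pi, ← Real.cos_abs r] at hlt
    have hrx : |r| < 2 * π * s / L := by
      by_contra hle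
      push Not at hle
      have : |r| ≤ π := by
        rw [abs_le]; exact ⟨hm.1.le, by linarith [hm.2]⟩
      exact absurd (Real.cos_le_cos_of_nonneg_of_le_pi (by positivity) this hle) (not_le.2 hlt)
    refine ⟨e, ?_⟩
    have h2 : (2 * π) * ((k : ℝ) * c - L * e) = r * L := by
      linear_combination L * hre - k * hc
    have h3 : (2 * π) * |(k : ℝ) * c - L * e| < 2 * π * s := by
      rw [lt_div_iff₀ hL'] at hrx
      rw [← abs_of_pos Real.two_pi_pos, ← abs_mul, h2, abs_mul, abs_of_pos hL',
        abs_of_pos Real.two_pi_pos]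
      exact hrx
    have h4 := lt_of_mul_lt_mul_left h3 Real.two_pi_pos.le
    exact_mod_cast h4
  -- once `L ∣ c`, the angle is a multiple of `2π`
  have fin : ∀ (L : ℕ) (c : ℤ), 0 < L → θ * L = 2 * π * c → (L : ℤ) ∣ c → θ = 0 := by
    rintro L c hL h1 ⟨d, rfl⟩
    have hL' : (0 : ℝ) < L := by exact_mod_cast hL
    have h2 : θ = 2 * π * d := by
      have : θ * L = 2 * π * d * L := by rw [h1]; push_cast; ring
      exact mul_right_cancel₀ hL'.ne' this
    rw [h2, abs_mul, abs_of_pos Real.two_pi_pos] at hθ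
    have h3 : |(d : ℝ)| < 1 := by
      by_contra hle
      push Not at hle
      nlinarith
    have h4 : d = 0 := by
      have : |d| < 1 := by exact_mod_cast h3
      exact Int.abs_lt_one_iff.1 this
    rw [h2, h4]; simp
  have hcosflip : ∀ k j : ℕ, 2 * k + j = N → cos (2 * π * k / N) = - cos (j * π / N) := by
    intro k j hkj
    have : (2 : ℝ) * k + j = N := by exact_mod_cast hkj
    rw [← Real.cos_pi_sub]
    congr 1
    field_simp
    linear_combination this
  have hhalf : ∀ j : ℕ, 3 * j ≤ N → 1 / 2 ≤ cos (j * π / N) := by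
    intro j hj
    rw [← Real.cos_pi_div_three]
    have hj' : (3 : ℝ) * j ≤ N := by exact_mod_cast hj
    apply Real.cos_le_cos_of_nonneg_of_le_pi (by positivity) (by linarith)
    rw [div_le_div_iff₀ hN0 (by norm_num)]
    nlinarith
  rcases Nat.even_or_odd' N with ⟨Q, hQ | hQ⟩
  · have h2N : 2 ∣ N := ⟨Q, hQ⟩
    have hNM' : N ∣ M := (Nat.dvd_mul_left N 2).trans hNM
    rcases Nat.even_or_odd' Q with ⟨R, hR | hR⟩
    · -- `4 ∣ N`: the unit `N / 2 - 1` is its own inverse modulo `N`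
      obtain ⟨k, rfl⟩ : ∃ k, R = k + 1 := ⟨R - 1, by omega⟩
      have hkc : (2 * k + 1).Coprime N := by
        have h1 : (2 * k + 1).Coprime (2 * k + 1 + 1) := by simp
        have h2 : (2 * k + 1).Coprime 2 := by simp
        have : N = 2 * (2 * k + 2) := by omega
        rw [this]; exact Nat.Coprime.mul_right h2 h1
      have hfl := hcosflip (2 * k + 1) 2 (by omega)
      obtain ⟨h1, h2⟩ := key N (2 * k + 1) h2N dvd_rfl hNM' hkc
        (by rw [hfl]; linarith [hhalf 2 (by omega)])
      obtain ⟨c, hc⟩ := exc N h1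
      have h3 := h2 _ hkc
      rw [hfl] at h3
      obtain ⟨e, he⟩ := coslt N 1 (2 * k + 1) c (by omega) (by omega) hc (by
        have h4 : 2 * π * (1 : ℕ) / N = (2 : ℕ) * π / N := by push_cast; ring
        rw [h4]; linarith)
      refine fin N c (by omega) hc ?_
      have h5 : ((2 * k + 1 : ℕ) : ℤ) * c = N * e := by
        have := Int.abs_lt_one_iff.1 (by exact_mod_cast he)
        linarith
      exact (Int.isCoprime_iff_gcd_eq_one.2 (by exact_mod_cast hkc.symm)).dvd_of_dvd_mul_left
        ⟨e, h5⟩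
    · -- `N ≡ 2 mod 4`: the units `N / 2 - 2` and `N / 2 - 4` are needed
      have hodd : ∀ k d : ℕ, k + 2 ^ d = Q → 0 < d → k.Coprime N := by
        intro k d hk hd
        have ho : Odd k := by
          have : Even (2 ^ d) := (Nat.even_pow' hd.ne').2 even_two
          rcases Nat.even_or_odd k with h | h
          · have := h.add this
            rw [hk, hR] at this
            exact absurd this (Nat.not_even_iff_odd.2 ⟨R, rfl⟩)
          · exact h
        have h2 : k.Coprime 2 := Nat.coprime_two_right.2 ho
        rw [hQ, ← hk]
        refine Nat.Coprime.mul_right h2 ?_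
        rw [Nat.coprime_self_add_right]
        exact h2.pow_right d
      obtain ⟨k, rfl⟩ : ∃ k, Q = k + 4 := ⟨Q - 4, by omega⟩
      have hkc := hodd (k + 2) 1 (by omega) one_pos
      have hkc' := hodd k 2 (by omega) two_pos
      have hfl := hcosflip (k + 2) 4 (by omega)
      have hfl' := hcosflip k 8 (by omega)
      obtain ⟨h1, h2⟩ := key N (k + 2) h2N dvd_rfl hNM' hkc
        (by rw [hfl]; linarith [hhalf 4 (by omega)])
      obtain ⟨c, hc⟩ := exc N h1
      have h3 := h2 _ hkc
      have h3' := h2 _ hkc'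
      rw [hfl] at h3
      rw [hfl'] at h3'
      obtain ⟨e, he⟩ := coslt N 2 (k + 2) c (by omega) (by omega) hc (by
        have h4 : 2 * π * (2 : ℕ) / N = (4 : ℕ) * π / N := by push_cast; ring
        rw [h4]; linarith)
      obtain ⟨e', he'⟩ := coslt N 4 k c (by omega) (by omega) hc (by
        have h4 : 2 * π * (4 : ℕ) / N = (8 : ℕ) * π / N := by push_cast; ring
        rw [h4]; linarith)
      refine fin N c (by omega) hc ?_
      have h5 : ((k + 2 : ℕ) : ℤ) * c = N * e := by
        by_contra hne
        -- otherwise `(k + 2) c ≡ δ = ±1`, `c` is odd, and `k c ≡ N / 2 + 2 δ` is not small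
        set δ : ℤ := ((k + 2 : ℕ) : ℤ) * c - N * e with hδ
        have hδ2 : |δ| < 2 := by exact_mod_cast he
        have hδ1 : δ = 1 ∨ δ = -1 := by
          have := abs_lt.1 hδ2
          have : δ ≠ 0 := fun h => hne (by linarith)
          omega
        have hNk : (N : ℤ) = 2 * k + 8 := by omega
        have hco : Odd c := by
          by_contra hcE
          obtain ⟨c', rfl⟩ := (Int.not_odd_iff_even.1 hcE).two_dvd
          have h6 : δ = 2 * ((k + 2) * c' - (k + 4) * e) := by
            rw [hδ, hNk]; push_cast; ring
          omega
        obtain ⟨c', hc'⟩ := hco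
        have h7 : (k : ℤ) * c - N * e' = (k + 4) * (1 + 2 * (c' + 2 * e - c - e')) + 2 * δ := by
          rw [hδ, hNk]
          push_cast
          linear_combination (k + 4 : ℤ) * hc'
        rw [h7] at he'
        obtain ⟨h8, h9⟩ := abs_lt.1 he'
        push_cast at h8 h9
        have hk3 : (3 : ℤ) ≤ k := by omega
        rcases le_or_gt 0 (c' + 2 * e - c - e') with hz | hz
        · have : (k + 4 : ℤ) * 1 ≤ (k + 4) * (1 + 2 * (c' + 2 * e - c - e')) :=
            mul_le_mul_of_nonneg_left (by omega) (by omega)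
          omega
        · have : (k + 4 : ℤ) * (1 + 2 * (c' + 2 * e - c - e')) ≤ (k + 4) * (-1) :=
            mul_le_mul_of_nonneg_left (by omega) (by omega)
          omega
      exact (Int.isCoprime_iff_gcd_eq_one.2 (by exact_mod_cast hkc.symm)).dvd_of_dvd_mul_left
        ⟨e, h5⟩
  · -- `N` odd: one of the numbers `(N - 1) / 2`, `(N - 1) / 2 + N` is odd, hence prime to `2 N`
    obtain ⟨k, hkc, hcos⟩ : ∃ k : ℕ, k.Coprime (2 * N) ∧
        cos (2 * π * k / N) = - cos ((1 : ℕ) * π / N) := by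
      have hfl := hcosflip Q 1 (by omega)
      have hQN : Q.Coprime N := by
        rw [hQ]; simp
      rcases Nat.even_or_odd Q with ho | ho
      · refine ⟨Q + N, Nat.Coprime.mul_right ?_ ?_, ?_⟩
        · rw [Nat.coprime_two_right]
          exact ho.add_odd ⟨Q, hQ⟩
        · simpa using hQN
        · rw [← hfl]
          exact hcosN _ _ (by simp [Nat.ModEq])
      · exact ⟨Q, Nat.Coprime.mul_right (Nat.coprime_two_right.2 ho) hQN, hfl⟩
    obtain ⟨h1, h2⟩ := key (2 * N) k (Nat.dvd_mul_right 2 N) (Nat.dvd_mul_left N 2) hNM hkc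
      (by rw [hcos]; linarith [hhalf 1 (by omega)])
    obtain ⟨c, hc⟩ := exc _ h1
    have h3 := h2 _ hkc
    rw [hcos] at h3
    obtain ⟨e, he⟩ := coslt (2 * N) 1 k c (by omega) (by omega) hc (by
      have h4 : 2 * π * (1 : ℕ) / (2 * N : ℕ) = (1 : ℕ) * π / N := by push_cast; field_simp
      rw [h4]; linarith)
    refine fin (2 * N) c (by omega) hc ?_
    have h5 : (k : ℤ) * c = (2 * N : ℕ) * e := by
      have := Int.abs_lt_one_iff.1 (by exact_mod_cast he)
      linarith
    exact (Int.isCoprime_iff_gcd_eq_one.2 (by exact_mod_cast hkc.symm)).dvd_of_dvd_mul_left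
      ⟨e, h5⟩

/-! ### The angles are determined -/

lemma exists_nat_mul_eq {q : ℚ} {x : ℝ} (hx : x = q * π) (hx0 : 0 < x) :
    ∃ a d : ℕ, d ≠ 0 ∧ x * d = 2 * π * a := by
  have hq : 0 < q := by
    have : (0 : ℝ) < q := by
      by_contra hc
      have := mul_nonpos_of_nonpos_of_nonneg (not_lt.1 hc) pi_pos.le
      linarith
    exact_mod_cast this
  refine ⟨q.num.toNat, 2 * q.den, by simp, ?_⟩
  have h1 : ((q.num.toNat : ℕ) : ℝ) = (q.num : ℝ) := by
    have : ((q.num.toNat : ℕ) : ℤ) = q.num := Int.toNat_of_nonneg (Rat.num_pos.2 hq).le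
    exact_mod_cast this
  have h2 : (q : ℝ) * q.den = q.num := by exact_mod_cast Rat.mul_den_eq_num q
  rw [h1, hx]
  push_cast
  linear_combination 2 * π * h2

/-- A root of unity `exp (iα)` of order dividing `M` is raised to the `k`-th power by `F`. -/
lemma GaloisMap.map_exp {K : Subfield ℂ} {F : ℂ →+ ℂ} (h : GaloisMap K F) {M k a : ℕ} (hM : M ≠ 0)
    (hK : Complex.exp (2 * π * Complex.I / M) ∈ K)
    (hF : F (Complex.exp (2 * π * Complex.I / M)) = Complex.exp (2 * π * Complex.I / M) ^ k)
    {α : ℝ} (hα : α * M = 2 * π * a) :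
    Complex.exp (α * Complex.I) ∈ K ∧
      F (Complex.exp (α * Complex.I)) = Complex.exp ((k * α : ℝ) * Complex.I) := by
  have hM' : (M : ℂ) ≠ 0 := by exact_mod_cast hM
  have e : (α : ℂ) * M = 2 * π * a := by exact_mod_cast hα
  have e1 : Complex.exp (α * Complex.I) = Complex.exp (2 * π * Complex.I / M) ^ a := by
    rw [← Complex.exp_nat_mul]
    congr 1
    field_simp
    linear_combination e
  refine ⟨e1 ▸ pow_mem hK a, ?_⟩
  rw [e1, h.map_pow hK, hF, ← pow_mul, ← Complex.exp_nat_mul]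
  congr 1
  push_cast
  field_simp
  linear_combination -(k : ℂ) * e

lemma exp_sub_inv (x : ℝ) : Complex.exp (x * Complex.I) - (Complex.exp (x * Complex.I))⁻¹
    = 2 * Complex.I * (Real.sin x : ℝ) := by
  rw [← Complex.exp_neg, ← neg_mul, Complex.exp_mul_I, Complex.exp_mul_I, Complex.cos_neg,
    Complex.sin_neg, Complex.ofReal_sin]
  ring

/-- The conjugate area identity, assumed for the shape parameter `(sin β / sin γ) exp (iα)` and all
Galois maps, gives `sin (kα) sin (kβ) > 0` for all `k` coprime to a common denominator of the
angles, and hence `α = β`. -/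
lemma angles_eq {N : ℕ} (hN : 10 < N) {α β γ : ℝ} (hα0 : 0 < α) (hβ0 : 0 < β)
    (hsum : α + β + γ = π) (hγ : γ = 2 * π / N) (hαq : ∃ q : ℚ, α = q * π)
    (hβq : ∃ q : ℚ, β = q * π)
    (H : ∀ (K : Subfield ℂ) (F : ℂ →+ ℂ), GaloisMap K F → Complex.exp (γ * Complex.I) ∈ K →
      ((Real.sin β / Real.sin γ : ℝ) : ℂ) * Complex.exp (α * Complex.I) ∈ K →
      ∃ X : ℝ, 0 ≤ X ∧ X * (F (((Real.sin β / Real.sin γ : ℝ) : ℂ) *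
        Complex.exp (α * Complex.I))).im = N * (F (Complex.exp (γ * Complex.I))).im) :
    α = β := by
  obtain ⟨q1, hq1⟩ := hαq
  obtain ⟨q2, hq2⟩ := hβq
  obtain ⟨a, d, hd, ha⟩ := exists_nat_mul_eq hq1 hα0
  obtain ⟨b, e, he, hb⟩ := exists_nat_mul_eq hq2 hβ0
  set M := 2 * N * (d * e) with hM
  have hN0 : (N : ℝ) ≠ 0 := by positivity
  have hM0 : M ≠ 0 := by
    rw [hM]
    exact mul_ne_zero (by omega) (mul_ne_zero hd he)
  have haM : α * M = 2 * π * ((a * (2 * N * e) : ℕ) : ℝ) := by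
    rw [hM]; push_cast; linear_combination (2 * N * e : ℝ) * ha
  have hbM : β * M = 2 * π * ((b * (2 * N * d) : ℕ) : ℝ) := by
    rw [hM]; push_cast; linear_combination (2 * N * d : ℝ) * hb
  have hcM : γ * M = 2 * π * ((2 * d * e : ℕ) : ℝ) := by
    rw [hM, hγ]; push_cast; field_simp
  have main : ∀ k : ℕ, k.Coprime M → 0 < Real.sin (k * α) * Real.sin (k * β) := by
    intro k hk
    obtain ⟨K, F, hKF, hζ, hFζ⟩ := exists_galoisMap hM0 hk (Complex.isPrimitiveRoot_exp M hM0)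
    obtain ⟨ma, fa⟩ := hKF.map_exp hM0 hζ hFζ haM
    obtain ⟨mb, fb⟩ := hKF.map_exp hM0 hζ hFζ hbM
    obtain ⟨mc, fc⟩ := hKF.map_exp hM0 hζ hFζ hcM
    have hsin : Real.sin (k * γ) ≠ 0 := by
      intro h0
      obtain ⟨n, hn⟩ := Real.sin_eq_zero_iff.1 h0
      rw [hγ] at hn
      have h1 : (n : ℝ) * N = 2 * k := by
        field_simp at hn
        linear_combination hn
      have h2 : (n : ℤ) * N = 2 * k := by exact_mod_cast h1
      have h3 : N ∣ 2 * k := by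
        have : (N : ℤ) ∣ ((2 * k : ℕ) : ℤ) := ⟨n, by push_cast; linarith⟩
        exact_mod_cast this
      have h4 : N.Coprime k := (hk.coprime_dvd_right ⟨2 * (d * e), by rw [hM]; ring⟩).symm
      have := Nat.le_of_dvd (by norm_num) (h4.dvd_of_dvd_mul_right h3)
      omega
    have hs2 : ((Real.sin β / Real.sin γ : ℝ) : ℂ) =
        (Complex.exp (β * Complex.I) - (Complex.exp (β * Complex.I))⁻¹) *
          (Complex.exp (γ * Complex.I) - (Complex.exp (γ * Complex.I))⁻¹)⁻¹ := by
      rw [exp_sub_inv, exp_sub_inv, ← div_eq_mul_inv, mul_div_mul_left _ _ (by simp)]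
      push_cast; rfl
    have mb' := sub_mem mb (inv_mem mb)
    have mc' := sub_mem mc (inv_mem mc)
    have ms : ((Real.sin β / Real.sin γ : ℝ) : ℂ) ∈ K := by
      rw [hs2]; exact mul_mem mb' (inv_mem mc')
    have fs : F ((Real.sin β / Real.sin γ : ℝ) : ℂ) =
        ((Real.sin (k * β) / Real.sin (k * γ) : ℝ) : ℂ) := by
      rw [hs2, hKF.map_mul _ mb', hKF.map_inv mc', map_sub, map_sub, hKF.map_inv mb,
        hKF.map_inv mc, fb, fc, exp_sub_inv, exp_sub_inv, ← div_eq_mul_inv,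
        mul_div_mul_left _ _ (by simp)]
      push_cast; rfl
    obtain ⟨X, hX, hX2⟩ := H K F hKF mc (mul_mem ms ma)
    rw [hKF.map_mul _ ms, fs, fa, fc, Complex.im_ofReal_mul, Complex.exp_ofReal_mul_I_im,
      Complex.exp_ofReal_mul_I_im] at hX2
    have h5 : X * (Real.sin (k * α) * Real.sin (k * β)) = N * Real.sin (k * γ) ^ 2 := by
      field_simp at hX2
      linear_combination hX2
    have h6 : 0 < X * (Real.sin (k * α) * Real.sin (k * β)) := by
      rw [h5]; positivity
    exact pos_of_mul_pos_right h6 hX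
  have hγ0 : 0 < γ := by rw [hγ]; positivity
  have hθ := theta_eq_zero (θ := α - β) (c := ((a * (2 * N * e) : ℕ) : ℤ) - ((b * (2 * N * d) : ℕ) : ℤ))
    hN hM0 ⟨d * e, rfl⟩ (by rw [abs_lt]; constructor <;> linarith)
    (by push_cast at haM hbM ⊢; linear_combination haM - hbM) (by
      intro k hk
      have h1 := main k hk
      have hodd : Odd k := by
        have : k.Coprime 2 := hk.coprime_dvd_right ⟨N * (d * e), by rw [hM]; ring⟩
        exact Nat.coprime_two_right.1 this
      have h2 : Real.cos (k * (α + β)) = - Real.cos (2 * π * k / N) := by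
        obtain ⟨r, rfl⟩ := hodd
        have : ((2 * r + 1 : ℕ) : ℝ) * (α + β) =
            π - 2 * π * ((2 * r + 1 : ℕ) : ℝ) / N + r * (2 * π) := by
          have : α + β = π - 2 * π / N := by linarith
          rw [this]; push_cast; field_simp; ring
        rw [this, Real.cos_add_nat_mul_two_pi, Real.cos_pi_sub]
      have h3 := Real.cos_add (k * α) (k * β)
      have h4 := Real.cos_sub (k * α) (k * β)
      rw [← mul_add, h2] at h3
      rw [← mul_sub] at h4
      linarith)
  linarith

/-! ### The fan of central triangles -/

/-- Every odd multiple of `π / N` has cosine at most `cos (π / N)`. -/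
lemma cos_odd_le {N : ℕ} (hN : N ≠ 0) (n : ℤ) :
    Real.cos ((2 * n - 1) * (π / N)) ≤ Real.cos (π / N) := by
  have hNR : (0 : ℝ) < N := by positivity
  have hN2 : (0 : ℤ) < 2 * N := by positivity
  set r := (2 * n - 1) % (2 * (N : ℤ)) with hr
  set q := (2 * n - 1) / (2 * (N : ℤ)) with hq
  have hdiv : r + 2 * N * q = 2 * n - 1 := Int.emod_add_mul_ediv _ _
  have h0 : 0 ≤ r := Int.emod_nonneg _ hN2.ne'
  have h1 : r < 2 * N := Int.emod_lt_of_pos _ hN2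
  have hodd : r % 2 = 1 := by
    have : r = 2 * (n - N * q - 1) + 1 := by linarith
    omega
  have h2 : 1 ≤ r := by omega
  have h3 : 1 ≤ 2 * N - r := by omega
  have hx : (2 * n - 1 : ℝ) * (π / N) = r * (π / N) + q * (2 * π) := by
    have : (r : ℝ) + 2 * N * q = 2 * n - 1 := by exact_mod_cast hdiv
    rw [← this]; field_simp
  have hp : 0 ≤ π / N := by positivity
  have hpN : N * (π / N) = π := by field_simp
  rw [hx, Real.cos_add_int_mul_two_pi]
  by_cases hrN : r ≤ N
  · have a1 : (1 : ℝ) ≤ r := by exact_mod_cast h2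
    have a2 : (r : ℝ) ≤ N := by exact_mod_cast hrN
    apply Real.cos_le_cos_of_nonneg_of_le_pi hp
    · linarith [mul_le_mul_of_nonneg_right a2 hp]
    · nlinarith
  · have a1 : (1 : ℝ) ≤ 2 * N - r := by exact_mod_cast h3
    have a2 : (N : ℝ) ≤ r := by exact_mod_cast (by omega : (N : ℤ) ≤ r)
    rw [← Real.cos_two_pi_sub]
    have e : 2 * π - r * (π / N) = (2 * N - r) * (π / N) := by rw [sub_mul, mul_assoc, hpN]
    rw [e]
    apply Real.cos_le_cos_of_nonneg_of_le_pi hp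
    · nlinarith
    · nlinarith

lemma re_pow_mul (γ : ℝ) (l j : ℕ) :
    (Complex.exp (γ * Complex.I) ^ l * conj (Complex.exp (γ * Complex.I) ^ j *
      Complex.exp ((γ / 2 : ℝ) * Complex.I))).re = Real.cos ((2 * ((l : ℤ) - j : ℤ) - 1) * (γ / 2)) := by
  rw [← Complex.exp_nat_mul, ← Complex.exp_nat_mul, ← Complex.exp_add, ← Complex.exp_conj,
    ← Complex.exp_add]
  have : (l * (γ * Complex.I) + conj (j * (γ * Complex.I) + (γ / 2 : ℝ) * Complex.I) : ℂ) =
      ((2 * ((l : ℤ) - j : ℤ) - 1) * (γ / 2) : ℝ) * Complex.I := by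
    simp only [map_add, map_mul, Complex.conj_ofReal, Complex.conj_I, map_natCast]
    push_cast
    ring
  rw [this, Complex.exp_ofReal_mul_I_re]

lemma mem_tri_iff (a b z : ℂ) : z ∈ convexHull ℝ (Set.range ![0, a, b]) ↔
    ∃ s t : ℝ, 0 ≤ s ∧ 0 ≤ t ∧ s + t ≤ 1 ∧ z = s * a + t * b := by
  rw [← image_stdTri]
  constructor
  · rintro ⟨w, ⟨h0, h1, h2⟩, rfl⟩
    exact ⟨w.re, w.im, h0, h1, h2, by simp⟩
  · rintro ⟨s, t, h0, h1, h2, rfl⟩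
    exact ⟨⟨s, t⟩, ⟨h0, h1, h2⟩, by simp⟩

/-- The regular `N`-gon is the union of its `N` central triangles, which overlap only in null sets.
The `j`-th triangle consists of the points of the polygon on which the projection to the `j`-th
mid-direction `ω ^ j exp (iγ / 2)` is the largest of all such projections. -/
lemma fan_decomposition {N : ℕ} (hN : 10 < N) {γ : ℝ} (hγ : γ = 2 * π / N) {ω : ℂ}
    (hω : ω = Complex.exp (γ * Complex.I)) :
    (⋃ j : Fin N, convexHull ℝ (Set.range ![0, ω ^ (j : ℕ), ω ^ ((j : ℕ) + 1)])) =
      convexHull ℝ (Set.range fun j : Fin N => ω ^ (j : ℕ)) ∧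
    Pairwise fun i j : Fin N => AEDisjoint volume
      (convexHull ℝ (Set.range ![0, ω ^ (i : ℕ), ω ^ ((i : ℕ) + 1)]))
      (convexHull ℝ (Set.range ![0, ω ^ (j : ℕ), ω ^ ((j : ℕ) + 1)])) := by
  have hN0 : N ≠ 0 := by omega
  have hNR : (10 : ℝ) < N := by exact_mod_cast hN
  have hγ2 : γ / 2 = π / N := by rw [hγ]; ring
  have hprim : IsPrimitiveRoot ω N := by
    have := Complex.isPrimitiveRoot_exp N hN0
    convert this using 1
    rw [hω, hγ]; push_cast; congr 1; field_simp
  have hωN : ω ^ N = 1 := hprim.pow_eq_one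
  set η := Complex.exp ((γ / 2 : ℝ) * Complex.I) with hη
  have hη2 : η * η = ω := by
    rw [hη, hω, ← Complex.exp_add]; congr 1; push_cast; ring
  have hη0 : η ≠ 0 := Complex.exp_ne_zero _
  have hp0 : 0 < π / N := by positivity
  have hpp : π / N < π / 2 := by
    apply div_lt_div_of_pos_left pi_pos (by norm_num); linarith
  have hcos : 0 < Real.cos (π / N) := Real.cos_pos_of_mem_Ioo ⟨by linarith, hpp⟩
  have hsin : 0 < Real.sin (π / N) := Real.sin_pos_of_pos_of_lt_pi hp0 (by linarith)
  have hηre : η.re = Real.cos (π / N) := by rw [hη, Complex.exp_ofReal_mul_I_re, hγ2]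
  have hηim : η.im = Real.sin (π / N) := by rw [hη, Complex.exp_ofReal_mul_I_im, hγ2]
  -- the `l`-th vertex projects to at most `cos (π / N)` on the `j`-th mid-direction
  set H : ℕ → ℂ → ℝ := fun j z => (z * conj (ω ^ j * η)).re with hH
  have Hle : ∀ j l, H j (ω ^ l) ≤ Real.cos (π / N) := by
    intro j l
    simp only [hH, hω, hη]
    rw [re_pow_mul, hγ2]
    exact cos_odd_le hN0 _
  have Heq : ∀ j, H j (ω ^ j) = Real.cos (π / N) := by
    intro j
    simp only [hH, hω, hη]
    rw [re_pow_mul, hγ2, ← Real.cos_neg]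
    congr 1; push_cast; ring
  have Heq' : ∀ j, H j (ω ^ (j + 1)) = Real.cos (π / N) := by
    intro j
    simp only [hH, hω, hη]
    rw [re_pow_mul, hγ2]
    congr 1; push_cast; ring
  have Hlin : ∀ j (s t : ℝ) (z w : ℂ), H j (s * z + t * w) = s * H j z + t * H j w := by
    intro j s t z w
    simp only [hH, add_mul, Complex.add_re, mul_assoc, Complex.re_ofReal_mul]
  constructor
  · apply Set.Subset.antisymm
    · refine Set.iUnion_subset fun j => convexHull_min ?_ (convex_convexHull _ _)
      have hmem : ∀ l : ℕ, ω ^ l ∈ convexHull ℝ (Set.range fun j : Fin N => ω ^ (j : ℕ)) := by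
        intro l
        refine subset_convexHull _ _ ⟨⟨l % N, Nat.mod_lt _ (by omega)⟩, ?_⟩
        exact (pow_eq_pow_mod l hωN).symm
      have h0 : (0 : ℂ) ∈ convexHull ℝ (Set.range fun j : Fin N => ω ^ (j : ℕ)) := by
        refine mem_convexHull_of_exists_fintype (fun _ => (1 / N : ℝ)) (fun j : Fin N => ω ^ (j : ℕ))
          (fun _ => by positivity) ?_ (fun j => ⟨j, rfl⟩) ?_
        · simp [hN0]
        · rw [← Finset.smul_sum, Fin.sum_univ_eq_sum_range (fun j => ω ^ j),
            hprim.geom_sum_eq_zero (by omega), smul_zero]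
      rintro _ ⟨i, rfl⟩
      fin_cases i
      · exact h0
      · exact hmem _
      · exact hmem _
    · intro z hz
      have hzle : ∀ j, H j z ≤ Real.cos (π / N) := by
        intro j
        have hcv : Convex ℝ {z | H j z ≤ Real.cos (π / N)} := by
          intro x hx y hy a b ha hb hab
          simp only [Set.mem_ofPred_eq] at *
          rw [Complex.real_smul, Complex.real_smul, Hlin]
          nlinarith
        refine convexHull_min ?_ hcv hz
        rintro _ ⟨l, rfl⟩
        exact Hle j l
      have hne : Nonempty (Fin N) := ⟨⟨0, by omega⟩⟩
      obtain ⟨j, hj⟩ := Finite.exists_max fun j : Fin N => H j z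
      have hmax : ∀ l : ℕ, H l z ≤ H j z := by
        intro l
        have := hj ⟨l % N, Nat.mod_lt _ (by omega)⟩
        simp only [hH] at this ⊢
        rwa [← pow_eq_pow_mod l hωN] at this
      have hωj : conj (ω ^ (j : ℕ)) * ω ^ (j : ℕ) = 1 := by
        rw [← Complex.normSq_eq_conj_mul_self, Complex.normSq_eq_norm_sq, norm_pow, hω,
          Complex.norm_exp_ofReal_mul_I]
        simp
      set w := z * conj (ω ^ (j : ℕ)) with hw
      have hzw : z = w * ω ^ (j : ℕ) := by rw [hw, mul_assoc, hωj, mul_one]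
      have hηη : conj η * η = 1 := by
        rw [← Complex.normSq_eq_conj_mul_self, Complex.normSq_eq_norm_sq, hη,
          Complex.norm_exp_ofReal_mul_I]
        simp
      have g0 : H j z = (w * conj η).re := by
        simp only [hH, hw, map_mul, mul_assoc]
      have g1 : H (j + 1) z = (w * conj ω * conj η).re := by
        simp only [hH, hw, map_mul, mul_assoc, pow_succ]
      have g2 : H (j + (N - 1)) z = (w * η).re := by
        have : conj (ω ^ (N - 1)) = ω := by
          have e1 : ω ^ (N - 1) * ω = 1 := by rw [← pow_succ, Nat.sub_add_cancel (by omega), hωN]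
          have e2 : conj ω * ω = 1 := by
            rw [← hη2, map_mul]; linear_combination (conj η * η + 1) * hηη
          have e3 : ω ^ (N - 1) = conj ω := by
            have : ω ≠ 0 := hprim.ne_zero hN0
            exact mul_right_cancel₀ this (e1.trans e2.symm)
          rw [e3, Complex.conj_conj]
        have e4 : ω * conj η = η := by rw [← hη2]; linear_combination η * hηη
        simp only [hH]
        rw [pow_add, map_mul, map_mul, this, mul_assoc, e4, hw, mul_assoc]
      have k1 := hmax (j + 1)
      have k2 := hmax (j + (N - 1))
      have k3 := hzle j
      rw [g1, g0] at k1
      rw [g2, g0] at k2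
      rw [g0] at k3
      set C := Real.cos (π / N)
      set S := Real.sin (π / N)
      have hCS : S ^ 2 + C ^ 2 = 1 := Real.sin_sq_add_cos_sq _
      have hωre : ω.re = C ^ 2 - S ^ 2 := by
        rw [← hη2, Complex.mul_re, hηre, hηim]; ring
      have hωim : ω.im = 2 * S * C := by
        rw [← hη2, Complex.mul_im, hηre, hηim]; ring
      simp only [Complex.mul_re, Complex.mul_im, Complex.conj_re, Complex.conj_im, hηre, hηim,
        hωre, hωim] at k1 k2 k3
      have q1 : 0 ≤ w.im := by nlinarith
      have q2 : w.im * (C ^ 2 - S ^ 2) ≤ w.re * (2 * S * C) := by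
        have e : w.re * C + w.im * S - ((w.re * (C ^ 2 - S ^ 2) + w.im * (2 * S * C)) * C +
            (w.im * (C ^ 2 - S ^ 2) - w.re * (2 * S * C)) * S) =
            2 * S * (w.re * (2 * S * C) - w.im * (C ^ 2 - S ^ 2)) := by
          linear_combination -(w.re * C + w.im * S) * hCS
        have e2 : 0 ≤ 2 * S * (w.re * (2 * S * C) - w.im * (C ^ 2 - S ^ 2)) := by
          rw [← e]; linarith
        have e3 := nonneg_of_mul_nonneg_right e2 (by positivity)
        linarith
      have hSC : 0 < 2 * S * C := by positivity
      refine Set.mem_iUnion.2 ⟨j, (mem_tri_iff _ _ _).2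
        ⟨w.re - w.im * (C ^ 2 - S ^ 2) / (2 * S * C), w.im / (2 * S * C), ?_, by positivity, ?_, ?_⟩⟩
      · rw [sub_nonneg, div_le_iff₀ hSC]; exact q2
      · have : (w.re - w.im * (C ^ 2 - S ^ 2) / (2 * S * C) + w.im / (2 * S * C)) * C =
            w.re * C + w.im * S := by
          field_simp
          linear_combination (-w.im) * hCS
        by_contra hcon
        push Not at hcon
        nlinarith
      · rw [hzw, pow_succ ω]
        have : w = ((w.re - w.im * (C ^ 2 - S ^ 2) / (2 * S * C) : ℝ) : ℂ) +
            ((w.im / (2 * S * C) : ℝ) : ℂ) * ω := by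
          apply Complex.ext
          · rw [Complex.add_re, Complex.ofReal_re, Complex.re_ofReal_mul, hωre]
            field_simp
            ring
          · rw [Complex.add_im, Complex.ofReal_im, Complex.im_ofReal_mul, hωim]
            field_simp
            ring
        nth_rewrite 1 [this]
        ring
  · intro i j hij
    -- the overlap lies on the line where the two mid-directions project equally
    set φ : ℂ →ₗ[ℝ] ℝ := Complex.reLm ∘ₗ LinearMap.mulRight ℝ (conj (ω ^ (i : ℕ) * η) - conj (ω ^ (j : ℕ) * η))
      with hφ
    have hφz : ∀ z, φ z = H i z - H j z := by
      intro z
      simp [hφ, hH, mul_sub]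
    have hφ' : ∀ z, φ z = (z * conj (ω ^ (i : ℕ) * η - ω ^ (j : ℕ) * η)).re := by
      intro z
      rw [map_sub]
      rfl
    have hnull : volume (LinearMap.ker φ : Set ℂ) = 0 := by
      apply Measure.addHaar_submodule
      rw [Ne, LinearMap.ker_eq_top]
      intro h0
      have h1 : φ (ω ^ (i : ℕ) * η - ω ^ (j : ℕ) * η) = 0 := by rw [h0]; rfl
      have h2 : φ (ω ^ (i : ℕ) * η - ω ^ (j : ℕ) * η) =
          Complex.normSq (ω ^ (i : ℕ) * η - ω ^ (j : ℕ) * η) := by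
        rw [hφ', Complex.mul_conj, Complex.ofReal_re]
      rw [h2, Complex.normSq_eq_zero, ← sub_mul, mul_eq_zero, or_iff_left hη0, sub_eq_zero] at h1
      exact hij (Fin.ext (hprim.pow_inj i.2 j.2 h1))
    refine measure_mono_null ?_ hnull
    have hS : ∀ (j l : Fin N) (z : ℂ), z ∈ convexHull ℝ (Set.range ![0, ω ^ (j : ℕ), ω ^ ((j : ℕ) + 1)]) →
        H l z ≤ H j z := by
      intro j l z hz
      obtain ⟨s, t, h0, h1, _, rfl⟩ := (mem_tri_iff _ _ _).1 hz
      rw [Hlin, Hlin, Heq, Heq']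
      exact add_le_add (mul_le_mul_of_nonneg_left (Hle _ _) h0)
        (mul_le_mul_of_nonneg_left (Hle _ _) h1)
    rintro z ⟨hz1, hz2⟩
    rw [SetLike.mem_coe, LinearMap.mem_ker, hφz]
    linarith [hS i j z hz1, hS j i z hz2]

/-! ### From the tiling to the complex plane -/

/-- Continuous functions integrate additively over essentially disjoint compact pieces. -/
lemma sum_integral_eq {ι : Type*} [Fintype ι] {S : ι → Set ℂ} (hS : ∀ i, IsCompact (S i))
    (hd : Pairwise fun i j => AEDisjoint volume (S i) (S j)) {f : ℂ → ℂ} (hf : Continuous f) :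
    ∑ i, ∫ z in S i, f z = ∫ z in ⋃ i, S i, f z := by
  rw [integral_iUnion_ae (fun i => (hS i).measurableSet.nullMeasurableSet) hd
    (hf.continuousOn.integrableOn_compact (isCompact_iUnion hS)), tsum_fintype]

lemma isCompact_hull {κ : Type*} [Finite κ] (v : κ → ℂ) :
    IsCompact (convexHull ℝ (Set.range v)) :=
  (Set.finite_range v).isCompact_convexHull ℝ

lemma aedisjoint_of_convex {A B : Set ℂ} (hA : Convex ℝ A) (hB : Convex ℝ B)
    (h : Disjoint (interior A) (interior B)) : AEDisjoint volume A B := by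
  refine measure_mono_null (t := frontier A ∪ frontier B) ?_
    (measure_union_null (hA.addHaar_frontier _) (hB.addHaar_frontier _))
  rintro z ⟨ha, hb⟩
  by_contra hc
  rw [Set.mem_union, not_or] at hc
  have h1 : z ∈ interior A := by
    by_contra h2; exact hc.1 ⟨subset_closure ha, h2⟩
  have h3 : z ∈ interior B := by
    by_contra h2; exact hc.2 ⟨subset_closure hb, h2⟩
  exact Set.disjoint_left.1 h h1 h3

/-- The identification of the coordinate plane with `ℂ`. -/
noncomputable def toC : Pt ≃ₗᵢ[ℝ] ℂ := Complex.orthonormalBasisOneI.repr.symm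

lemma toC_ngonVertex (N j : ℕ) :
    toC (ngonVertex N j) = Complex.exp ((2 * π / N : ℝ) * Complex.I) ^ j := by
  rw [← Complex.exp_nat_mul]
  have : (j * ((2 * π / N : ℝ) * Complex.I) : ℂ) = ((2 * π * j / N : ℝ) : ℂ) * Complex.I := by
    push_cast; ring
  rw [this, Complex.exp_mul_I]
  have h : ∀ x : Pt, toC x = x 0 + x 1 * Complex.I := by
    intro x
    rw [toC, ← Complex.orthonormalBasisOneI.sum_repr_symm]
    simp
  rw [h]
  simp [ngonVertex]

lemma toC_hull {κ : Type*} (v : κ → Pt) :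
    toC '' convexHull ℝ (Set.range v) = convexHull ℝ (Set.range fun i => toC (v i)) := by
  have := (toC.toLinearEquiv : Pt →ₗ[ℝ] ℂ).image_convexHull (Set.range v)
  rw [← Set.range_comp] at this
  exact this

/-- A triangle with angles `α, β, γ` has shape parameter `(sin β / sin γ) exp (± iα)`, the sign
being that of its orientation. -/
lemma shape_of_angles {T : Fin 3 → Pt} {α β γ : ℝ} (hT : AffineIndependent ℝ T)
    (h : HasAngles T α β γ) (hα0 : 0 < α) (hα : α < π) (hβ0 : 0 < β) (hβ : β < π)
    (hγ0 : 0 < γ) (hγ : γ < π) :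
    (0 < dbl (fun i => toC (T i)) ∧ toC (T 2) - toC (T 0) =
        (((Real.sin β / Real.sin γ : ℝ) : ℂ) * Complex.exp (α * Complex.I)) * (toC (T 1) - toC (T 0))) ∨
    (dbl (fun i => toC (T i)) < 0 ∧ toC (T 2) - toC (T 0) =
        conj (((Real.sin β / Real.sin γ : ℝ) : ℂ) * Complex.exp (α * Complex.I)) *
          (toC (T 1) - toC (T 0))) := by
  obtain ⟨h0, h1, h2⟩ := h
  have sα := Real.sin_pos_of_pos_of_lt_pi hα0 hα
  have sβ := Real.sin_pos_of_pos_of_lt_pi hβ0 hβ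
  have sγ := Real.sin_pos_of_pos_of_lt_pi hγ0 hγ
  set e1 := toC (T 1) - toC (T 0) with he1
  set e2 := toC (T 2) - toC (T 0) with he2
  have n1 : e1 ≠ 0 := by
    rw [he1, sub_ne_zero]; exact fun e => by simpa using hT.injective (toC.injective e)
  have n2 : e2 ≠ 0 := by
    rw [he2, sub_ne_zero]; exact fun e => by simpa using hT.injective (toC.injective e)
  have hang : |(e2 / e1).arg| = α := by
    rw [← Complex.angle_eq_abs_arg n2 n1, InnerProductGeometry.angle_comm, ← h0, he1, he2,
      ← map_sub, ← map_sub, angleAt, EuclideanGeometry.angle]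
    exact toC.toLinearIsometry.angle_map _ _
  have hnorm : ‖e2 / e1‖ = Real.sin β / Real.sin γ := by
    have hd1 : ‖e1‖ = dist (T 1) (T 0) := by
      rw [he1, ← dist_eq_norm, toC.dist_map]
    have hd2 : ‖e2‖ = dist (T 2) (T 0) := by
      rw [he2, ← dist_eq_norm, toC.dist_map]
    have hl := EuclideanGeometry.law_sin (T 2) (T 1) (T 0)
    have h1' : ∠ (T 2) (T 1) (T 0) = β := h1
    have h2' : ∠ (T 0) (T 2) (T 1) = γ := h2
    rw [h1', h2', dist_comm (T 0) (T 2)] at hl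
    have hp : 0 < ‖e1‖ := norm_pos_iff.2 n1
    rw [norm_div, div_eq_div_iff hp.ne' sγ.ne', hd1, hd2, hl, mul_comm]
  set r := Real.sin β / Real.sin γ with hr
  have hr0 : 0 < r := div_pos sβ sγ
  have hρ : e2 / e1 = r * Complex.exp ((e2 / e1).arg * Complex.I) := by
    rw [← hnorm, Complex.norm_mul_exp_arg_mul_I]
  have hD : ∀ ρ : ℂ, e2 = ρ * e1 → dbl (fun i => toC (T i)) = ‖e1‖ ^ 2 * ρ.im := by
    intro ρ hρ
    change (conj e1 * e2).im = _
    rw [hρ, mul_left_comm, ← Complex.normSq_eq_conj_mul_self, mul_comm, Complex.im_ofReal_mul,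
      Complex.normSq_eq_norm_sq]
  have hp : 0 < ‖e1‖ ^ 2 := by have := norm_pos_iff.2 n1; positivity
  have him : ((r : ℂ) * Complex.exp (α * Complex.I)).im = r * Real.sin α := by
    rw [Complex.im_ofReal_mul, Complex.exp_ofReal_mul_I_im]
  rcases abs_choice (e2 / e1).arg with ha | ha
  · left
    have e : e2 = ((r : ℂ) * Complex.exp (α * Complex.I)) * e1 := by
      rw [← hang, ha, ← hρ, div_mul_cancel₀ _ n1]
    refine ⟨?_, e⟩
    rw [hD _ e, him]; positivity
  · right
    have e : e2 = conj ((r : ℂ) * Complex.exp (α * Complex.I)) * e1 := by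
      have : (e2 / e1).arg = -α := by rw [← hang, ha, neg_neg]
      rw [this] at hρ
      rw [map_mul, Complex.conj_ofReal, ← Complex.exp_conj, map_mul, Complex.conj_ofReal,
        Complex.conj_I, mul_neg, ← neg_mul, ← Complex.ofReal_neg, ← hρ, div_mul_cancel₀ _ n1]
    refine ⟨?_, e⟩
    rw [hD _ e, Complex.conj_im, him]
    have : 0 < ‖e1‖ ^ 2 * (r * Real.sin α) := by positivity
    linarith

/-- In `ℂ`, the tiles and the fan of triangles around the centre integrate to the same values. -/
lemma integral_tiles_eq {N : ℕ} (hN : 10 < N) {m : ℕ} {T : Fin m → Fin 3 → Pt}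
    (h : IsTiling N T) {f : ℂ → ℂ} (hf : Continuous f) {ω : ℂ}
    (hω : ω = Complex.exp ((2 * π / N : ℝ) * Complex.I)) :
    ∑ t, ∫ z in convexHull ℝ (Set.range fun i => toC (T t i)), f z =
      ∑ j : Fin N, ∫ z in convexHull ℝ (Set.range ![0, ω ^ (j : ℕ), ω ^ ((j : ℕ) + 1)]), f z := by
  obtain ⟨hc, hd⟩ := fan_decomposition hN rfl hω
  obtain ⟨-, hT, hU⟩ := h
  rw [sum_integral_eq (fun _ => isCompact_hull _) hd hf, hc, sum_integral_eq
    (fun _ => isCompact_hull _) _ hf]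
  · congr 2
    simp only [← toC_hull]
    rw [← Set.image_iUnion]
    change toC '' (⋃ t, triRegion (T t)) = _
    rw [hU, ngon, toC_hull]
    simp only [toC_ngonVertex, hω]
  · intro t s hts
    refine aedisjoint_of_convex (convex_convexHull _ _) (convex_convexHull _ _) ?_
    rw [← toC_hull, ← toC_hull]
    have := hT hts
    have e : ∀ A : Set Pt, interior (toC '' A) = toC '' interior A :=
      fun A => (toC.toHomeomorph.image_interior A).symm
    rw [e, e]
    exact (Set.disjoint_image_iff toC.injective).2 this

/-- If `N > 10`, `R_N` is tiled by triangles all similar to a triangle whose angles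
`α, β, γ` are rational multiples of `π`, and the equation at every vertex of `R_N` is
`α + β = δ_N` (exactly two tiles meet each vertex, one with its angle labeled `α` and one
with its angle labeled `β` there), then `α = β = (N-2)π/(2N)` and `γ = 2π/N`. -/
theorem statement4 (N : ℕ) (hN : 10 < N)
    (α β γ : ℝ) (hα0 : 0 < α) (hβ0 : 0 < β) (hγ0 : 0 < γ) (hsum : α + β + γ = π)
    (hαq : ∃ q : ℚ, α = q * π) (hβq : ∃ q : ℚ, β = q * π) (hγq : ∃ q : ℚ, γ = q * π)
    {m : ℕ} (T : Fin m → Fin 3 → Pt) (htile : IsTiling N T)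
    (hang : ∀ t, HasAngles (T t) α β γ)
    (hαβ : α + β = ngonAngle N)
    (hvert : (∀ j : Fin N,
         countAt (T) 0 (ngonVertex N j) = 1 ∧
         countAt (T) 1 (ngonVertex N j) = 1 ∧
         countAt (T) 2 (ngonVertex N j) = 0)) :
    α = ((N : ℝ) - 2) * π / (2 * N) ∧ β = ((N : ℝ) - 2) * π / (2 * N) ∧ γ = 2 * π / N := by
  have hN0 : (0 : ℝ) < N := by positivity
  have hN0' : (N : ℝ) ≠ 0 := hN0.ne'
  have hNR : (10 : ℝ) < N := by exact_mod_cast hN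
  have hγ : γ = 2 * π / N := by
    rw [ngonAngle] at hαβ
    have : γ = π - ((N : ℝ) - 2) * π / N := by linarith
    rw [this]; field_simp; ring
  have hαβ' : α = β := by
    refine angles_eq hN hα0 hβ0 hsum hγ hαq hβq fun K F hF hω hρ => ?_
    have hsg : 0 < Real.sin γ := Real.sin_pos_of_pos_of_lt_pi hγ0 (by linarith)
    refine conjugate_area hF hω (Complex.norm_exp_ofReal_mul_I γ) ?_ hρ
      (fun t i => toC (T t i)) (fun t => ?_) fun f hf => ?_
    · rw [Complex.exp_ofReal_mul_I_im]; exact hsg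
    · exact shape_of_angles (htile.1 t) (hang t) hα0 (by linarith) hβ0 (by linarith) hγ0
        (by linarith)
    · exact integral_tiles_eq hN htile hf (by rw [hγ])
  have h2 : α = ((N : ℝ) - 2) * π / (2 * N) := by
    rw [ngonAngle, ← hαβ'] at hαβ
    have : α = ((N : ℝ) - 2) * π / N / 2 := by linarith
    rw [this]; field_simp
  exact ⟨h2, hαβ' ▸ h2, hγ⟩

end
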